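/- Let c = 2π√(5/12). For every ε > 0 there exists N such that for all positive integers m, n with m ≤ 2n and min(m, 2n−m) ≥ N, one has | D(m,n) / [ (5c/(2^5·3)) · e^{c√μ}/μ² · (1 + e^{−c|n−m|/(2√μ)})^{−2} ] − 1 | < ε, where μ := min(m, 2n−m). In other words, uniformly for positive integers m, n with m ≤ 2n, D(m,n) ~ (5c/96) · e^{c√μ}/μ² · (1 + e^{−c|n−m|/(2√μ)})^{−2} as μ = min(m, 2n−m) → ∞. -/

import Mathlib

open Finset

/-- A pair of sequences of parts is *steadily decreasing* if
`min (a i) (b i) ≥ max (a (i+1)) (b (i+1))` for all `i`. -/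
noncomputable def SteadilyDecreasing (a b : ℕ → ℕ) : Prop :=
  ∀ i, max (a (i + 1)) (b (i + 1)) ≤ min (a i) (b i)

/-- `bipartitePi m n` is the number of pairs of partitions (given as non-increasing,
finitely supported sequences) of the bipartite number `(m, n)` with steadily
decreasing parts. -/
noncomputable def bipartitePi (m n : ℕ) : ℕ :=
  Nat.card {p : (ℕ →₀ ℕ) × (ℕ →₀ ℕ) //
    (∀ i, p.1 (i + 1) ≤ p.1 i) ∧ (∀ i, p.2 (i + 1) ≤ p.2 i) ∧
    SteadilyDecreasing p.1 p.2 ∧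
    (p.1.sum fun _ x => x) = m ∧ (p.2.sum fun _ x => x) = n}

/-- The partition function `p n`. -/
noncomputable def partitionCount (n : ℕ) : ℕ := Nat.card (Nat.Partition n)

/-- The partition function extended to the integers, with `p r = 0` for `r < 0`. -/
noncomputable def partitionCountInt (r : ℤ) : ℕ := if 0 ≤ r then partitionCount r.toNat else 0

/-- The cubic partition function `c n`, counting partitions of `n` in which even
parts come in two colors (equivalently, pairs of a partition together with a
partition into even parts, of total size `n`). -/
noncomputable def cubicPartition (n : ℕ) : ℕ :=
  Nat.card {p : Multiset ℕ × Multiset ℕ //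
    (∀ i ∈ p.1, 0 < i) ∧ (∀ i ∈ p.2, 0 < i ∧ Even i) ∧ p.1.sum + p.2.sum = n}

/-- The Andrews–Garvan crank of a partition: the largest part if there are no ones,
and otherwise the number of parts larger than the number of ones minus the number of
ones. -/
noncomputable def crank {n : ℕ} (l : n.Partition) : ℤ :=
  if l.parts.count 1 = 0 then (l.parts.sup : ℤ)
  else ((l.parts.filter fun p => l.parts.count 1 < p).card : ℤ) - l.parts.count 1

/-- `crankM m n` is the crank counting function `M(m, n)`: the number of partitions
of `n` with crank `m`, with the standard convention at `n = 1`
(`M(0,1) = -1`, `M(±1,1) = 1`, `M(m,1) = 0` otherwise). -/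
noncomputable def crankM (m : ℤ) (n : ℕ) : ℤ :=
  if n = 1 then (if m = 0 then -1 else if m.natAbs = 1 then 1 else 0)
  else (Nat.card {l : n.Partition // crank l = m} : ℤ)

/-- `alphaBip s k = Σ_{ℓ ≥ 0} (-1)^ℓ p(k - ℓ(ℓ+1)/2 - ℓ s)`. -/
noncomputable def alphaBip (s k : ℕ) : ℤ :=
  ∑' ℓ : ℕ, (-1 : ℤ) ^ ℓ *
    (partitionCountInt ((k : ℤ) - ℓ * (ℓ + 1) / 2 - ℓ * s) : ℤ)

/-- `Dbip m n = π(m,n) - π(m-1,n)`, with `π(-1,n) := 0`. -/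
noncomputable def Dbip (m n : ℕ) : ℤ :=
  (bipartitePi m n : ℤ) - if m = 0 then 0 else (bipartitePi (m - 1) n : ℤ)

section
open Finset Filter Topology

namespace BP

abbrev Tr := (ℕ →₀ ℕ) × (ℕ →₀ ℕ) × (ℕ →₀ ℕ)

/-- weight with linear function -/
noncomputable def ws (c : ℕ → ℕ) (u : ℕ →₀ ℕ) : ℕ := u.sum fun i x => c i * x

lemma ws_eq (c : ℕ → ℕ) (u : ℕ →₀ ℕ) (K : ℕ) (h : ∀ i, K ≤ i → u i = 0) :
    ws c u = ∑ i ∈ range K, c i * u i := by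
  unfold ws
  refine Finsupp.sum_of_support_subset _ ?_ _ (by simp)
  intro i hi
  by_contra hc
  simp at hi hc
  exact hi (h i hc)

lemma ex_bound (u : ℕ →₀ ℕ) : ∃ K, ∀ i, K ≤ i → u i = 0 := by
  refine ⟨u.support.sup id + 1, fun i hi => ?_⟩
  by_contra hc
  have := Finset.le_sup (f := id) (Finsupp.mem_support_iff.mpr hc)
  simp at this
  omega

noncomputable def wn (t : Tr) : ℕ :=
  ws (fun i => i) t.1 + ws (fun i => i + 1) t.2.1 + ws (fun i => 2 * (i + 1)) t.2.2
noncomputable def wm (t : Tr) : ℕ :=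
  ws (fun i => i + 1) t.1 + ws (fun i => i) t.2.1 + ws (fun i => 2 * (i + 1)) t.2.2

def gap (a b : ℕ → ℕ) (k : ℕ) : ℕ := min (a k) (b k) - max (a (k+1)) (b (k+1))

lemma sum_id (a b : ℕ → ℕ) (h : SteadilyDecreasing a b) (K : ℕ) :
    ∑ i ∈ range K, ((i+1) * gap a b i + i * ((a i - b i) + (b i - a i)) + (a i - b i))
      + K * max (a K) (b K) = ∑ i ∈ range K, a i := by
  induction K with
  | zero => simp
  | succ K ih =>
    rw [sum_range_succ, sum_range_succ, ← ih]
    have hK := h K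
    unfold gap
    obtain ⟨d, hd⟩ := Nat.exists_eq_add_of_le hK
    rw [hd]
    rcases le_total (a K) (b K) with hab | hab
    · obtain ⟨e, he⟩ := Nat.exists_eq_add_of_le hab
      have : max (a K) (b K) = b K := max_eq_right hab
      rw [min_eq_left hab] at hd
      rw [this, he, Nat.add_sub_cancel_left, Nat.add_sub_cancel_left, Nat.sub_eq_zero_of_le (by omega), hd]
      ring
    · obtain ⟨e, he⟩ := Nat.exists_eq_add_of_le hab
      have : max (a K) (b K) = a K := max_eq_left hab
      rw [min_eq_right hab] at hd
      rw [this, he, Nat.add_sub_cancel_left, Nat.add_sub_cancel_left, Nat.sub_eq_zero_of_le (by omega), hd]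
      ring

lemma sum_eo (f : ℕ → ℕ) (K : ℕ) :
    ∑ i ∈ range (2*K), f i = ∑ i ∈ range K, (f (2*i) + f (2*i+1)) := by
  induction K with
  | zero => simp
  | succ K ih => rw [Nat.mul_succ, sum_range_succ, sum_range_succ, ih, sum_range_succ, add_assoc]

abbrev SD (m n : ℕ) := {p : (ℕ →₀ ℕ) × (ℕ →₀ ℕ) //
    (∀ i, p.1 (i + 1) ≤ p.1 i) ∧ (∀ i, p.2 (i + 1) ≤ p.2 i) ∧
    SteadilyDecreasing p.1 p.2 ∧
    (p.1.sum fun _ x => x) = m ∧ (p.2.sum fun _ x => x) = n}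

lemma ex_bound2 (p : (ℕ →₀ ℕ) × (ℕ →₀ ℕ)) : ∃ K, ∀ i, K ≤ i → p.1 i = 0 ∧ p.2 i = 0 := by
  obtain ⟨K, hK⟩ := ex_bound p.1
  obtain ⟨L, hL⟩ := ex_bound p.2
  exact ⟨max K L, fun i hi => ⟨hK i (by omega), hL i (by omega)⟩⟩

noncomputable def fsOf (f : ℕ → ℕ) (h : ∃ K, ∀ i, K ≤ i → f i = 0) : ℕ →₀ ℕ :=
  Finsupp.onFinset (range h.choose) f (fun a ha => by
    by_contra hc
    simp at hc
    exact ha (h.choose_spec a hc))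

@[simp] lemma fsOf_apply (f : ℕ → ℕ) (h) (i : ℕ) : fsOf f h i = f i := rfl

noncomputable def fwd (p : (ℕ →₀ ℕ) × (ℕ →₀ ℕ)) : Tr :=
  (fsOf (fun i => gap p.1 p.2 (2*i) + (p.1 i - p.2 i)) (by
      obtain ⟨K, hK⟩ := ex_bound2 p
      refine ⟨K, fun i hi => ?_⟩
      simp [gap, hK i hi, hK (2*i) (by omega)]),
   fsOf (fun i => gap p.1 p.2 (2*i) + (p.2 i - p.1 i)) (by
      obtain ⟨K, hK⟩ := ex_bound2 p
      refine ⟨K, fun i hi => ?_⟩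
      simp [gap, hK i hi, hK (2*i) (by omega)]),
   fsOf (fun i => gap p.1 p.2 (2*i+1)) (by
      obtain ⟨K, hK⟩ := ex_bound2 p
      refine ⟨K, fun i hi => ?_⟩
      simp [gap, hK (2*i+1) (by omega)]))

lemma gap_comm (a b : ℕ → ℕ) (k) : gap a b k = gap b a k := by
  unfold gap; rw [min_comm, max_comm]

lemma fwd_wm (p : (ℕ →₀ ℕ) × (ℕ →₀ ℕ)) (h : SteadilyDecreasing p.1 p.2) :
    wm (fwd p) = p.1.sum fun _ x => x := by
  obtain ⟨K, hK⟩ := ex_bound2 p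
  have h1 : (p.1.sum fun _ x => x) = ∑ i ∈ range (2*K), p.1 i := by
    have := ws_eq (fun _ => 1) p.1 (2*K) (fun i hi => (hK i (by omega)).1)
    simpa [ws] using this
  have e1 := sum_id p.1 p.2 h (2*K)
  have e0 : ∀ i, K ≤ i → gap p.1 p.2 i = 0 := fun i hi => by simp [gap, hK i hi]
  rw [h1, ← e1, (hK (2*K) (by omega)).1, (hK (2*K) (by omega)).2]
  unfold wm
  rw [ws_eq _ _ K, ws_eq _ _ K, ws_eq _ _ K]
  · have e2 : ∑ i ∈ range (2*K), ((i+1) * gap p.1 p.2 i + i * ((p.1 i - p.2 i) + (p.2 i - p.1 i)) + (p.1 i - p.2 i))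
      = ∑ i ∈ range (2*K), (i+1) * gap p.1 p.2 i + ∑ i ∈ range K, (i * ((p.1 i - p.2 i) + (p.2 i - p.1 i)) + (p.1 i - p.2 i)) := by
      simp_rw [add_assoc]
      rw [sum_add_distrib]
      congr 1
      symm
      apply sum_subset (by intro i; simp; omega)
      intro i _ hi
      simp at hi
      simp [hK i hi]
    rw [e2, sum_eo, ← sum_add_distrib, ← sum_add_distrib, ← sum_add_distrib]
    simp only [max_self, mul_zero, add_zero]
    apply sum_congr rfl
    intro i _
    simp [fwd]
    ring
  all_goals
    intro i hi
    simp [fwd, e0 (2*i) (by omega), e0 (2*i+1) (by omega), hK i hi]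

lemma fwd_swap (p : (ℕ →₀ ℕ) × (ℕ →₀ ℕ)) :
    fwd p.swap = ((fwd p).2.1, (fwd p).1, (fwd p).2.2) := by
  ext i <;> simp [fwd, gap_comm]

lemma sd_comm {a b : ℕ → ℕ} (h : SteadilyDecreasing a b) : SteadilyDecreasing b a := by
  intro i; rw [min_comm, max_comm]; exact h i

lemma fwd_wn (p : (ℕ →₀ ℕ) × (ℕ →₀ ℕ)) (h : SteadilyDecreasing p.1 p.2) :
    wn (fwd p) = p.2.sum fun _ x => x := by
  have := fwd_wm p.swap (sd_comm h)
  rw [fwd_swap] at this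
  rw [← Prod.fst_swap, ← this]
  unfold wm wn; simp; ring

lemma fwd_inj (p p' : (ℕ →₀ ℕ) × (ℕ →₀ ℕ)) (h : SteadilyDecreasing p.1 p.2)
    (h' : SteadilyDecreasing p'.1 p'.2) (he : fwd p = fwd p') : p = p' := by
  obtain ⟨K, hK⟩ := ex_bound2 p
  obtain ⟨K', hK'⟩ := ex_bound2 p'
  have hg : ∀ k, gap p.1 p.2 k = gap p'.1 p'.2 k := by
    intro k
    have e1 := DFunLike.congr_fun (congrArg (fun t : Tr => t.1) he) (k/2)
    have e2 := DFunLike.congr_fun (congrArg (fun t : Tr => t.2.1) he) (k/2)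
    have e3 := DFunLike.congr_fun (congrArg (fun t : Tr => t.2.2) he) (k/2)
    simp [fwd] at e1 e2 e3
    rcases Nat.even_or_odd' k with ⟨j, rfl | rfl⟩
    · have : 2 * j / 2 = j := by omega
      rw [this] at e1 e2
      omega
    · have : (2 * j + 1) / 2 = j := by omega
      rw [this] at e3
      exact e3
  have hmain : ∀ d i, max K K' ≤ i + d → p.1 i = p'.1 i ∧ p.2 i = p'.2 i := by
    intro d
    induction d with
    | zero =>
      intro i hi
      simp [hK i (by omega), hK' i (by omega)]
    | succ d ih =>
      intro i hi
      obtain ⟨a1, a2⟩ := ih (i+1) (by omega)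
      have e1 := DFunLike.congr_fun (congrArg (fun t : Tr => t.1) he) i
      have e2 := DFunLike.congr_fun (congrArg (fun t : Tr => t.2.1) he) i
      simp [fwd, hg] at e1 e2
      have e3 := hg i
      unfold gap at e3
      rw [a1, a2] at e3
      have := h i
      have := h' i
      rw [a1, a2] at *
      omega
  ext i
  · exact (hmain (max K K') i (by omega)).1
  · exact (hmain (max K K') i (by omega)).2

def FF (t : Tr) (k : ℕ) : ℕ := if k % 2 = 0 then min (t.1 (k/2)) (t.2.1 (k/2)) else t.2.2 (k/2)

lemma fwd_surj (t : Tr) : ∃ p : (ℕ →₀ ℕ) × (ℕ →₀ ℕ), SteadilyDecreasing p.1 p.2 ∧ fwd p = t := by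
  obtain ⟨u, v, g⟩ := t
  obtain ⟨K1, h1⟩ := ex_bound u
  obtain ⟨K2, h2⟩ := ex_bound v
  obtain ⟨K3, h3⟩ := ex_bound g
  set K := 2 * (K1 + K2 + K3) with hKd
  set F := FF (u, v, g) with hF
  have hF0 : ∀ i, K ≤ i → F i = 0 := by
    intro i hi
    simp only [hF, FF]
    split_ifs
    · rw [h1 _ (by omega)]; simp
    · rw [h3 _ (by omega)]
  set M : ℕ → ℕ := fun i => ∑ k ∈ Ico i K, (F k + ((u k - v k) + (v k - u k))) with hM
  have hM1 : ∀ i, M i = F i + ((u i - v i) + (v i - u i)) + M (i+1) := by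
    intro i
    by_cases hi : i < K
    · simp only [hM]
      rw [Finset.sum_eq_sum_Ico_succ_bot hi]
    · simp only [hM]
      rw [Ico_eq_empty (by omega), Ico_eq_empty (by omega), hF0 i (by omega), h1 i (by omega), h2 i (by omega)]
      simp
  have hM0 : ∀ i, K ≤ i → M i = 0 := by
    intro i hi
    simp [hM, Ico_eq_empty (show ¬ i < K by omega)]
  let a : ℕ →₀ ℕ := fsOf (fun i => M (i+1) + F i + (u i - v i))
    ⟨K, fun i hi => by rw [hM0 _ (by omega), hF0 _ hi, h1 i (by omega)]; simp⟩
  let b : ℕ →₀ ℕ := fsOf (fun i => M (i+1) + F i + (v i - u i))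
    ⟨K, fun i hi => by rw [hM0 _ (by omega), hF0 _ hi, h2 i (by omega)]; simp⟩
  have ha : ∀ i, a i = M (i+1) + F i + (u i - v i) := fun i => rfl
  have hb : ∀ i, b i = M (i+1) + F i + (v i - u i) := fun i => rfl
  have hmax : ∀ i, max (a i) (b i) = M i := by
    intro i; have := hM1 i; rw [ha, hb]; omega
  have hmin : ∀ i, min (a i) (b i) = M (i+1) + F i := by
    intro i; rw [ha, hb]; omega
  have hgap : ∀ i, gap a b i = F i := by
    intro i; unfold gap; rw [hmax, hmin]; omega
  refine ⟨(a, b), ?_, ?_⟩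
  · intro i
    simp only [hmax, hmin]; omega
  · have e1 : ∀ i, F (2*i) = min (u i) (v i) := by
      intro i; simp [hF, FF]
    have e2 : ∀ i, F (2*i+1) = g i := by
      intro i
      have : (2*i+1)/2 = i := by omega
      simp [hF, FF, Nat.add_mod, this]
    ext i
    · simp only [fwd, fsOf_apply, hgap, e1, ha, hb]; omega
    · simp only [fwd, fsOf_apply, hgap, e1, ha, hb]; omega
    · simp only [fwd, fsOf_apply, hgap, e2]

lemma pi_eq (m n : ℕ) : bipartitePi m n = Nat.card {t : Tr // wm t = m ∧ wn t = n} := by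
  unfold bipartitePi
  refine Nat.card_congr (Equiv.ofBijective
    (fun p => ⟨fwd p.1, by
      obtain ⟨p, h1, h2, h3, h4, h5⟩ := p
      exact ⟨(fwd_wm p h3).trans h4, (fwd_wn p h3).trans h5⟩⟩) ⟨?_, ?_⟩)
  · rintro ⟨p, h1, h2, h3, h4, h5⟩ ⟨p', h1', h2', h3', h4', h5'⟩ he
    simp only [Subtype.mk.injEq] at he ⊢
    exact fwd_inj p p' h3 h3' he
  · rintro ⟨t, h1, h2⟩
    obtain ⟨p, hp, rfl⟩ := fwd_surj t
    refine ⟨⟨p, fun i => ?_, fun i => ?_, hp, ?_, ?_⟩, rfl⟩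
    · have := hp i; omega
    · have := hp i; omega
    · rw [← h1, fwd_wm p hp]
    · rw [← h2, fwd_wn p hp]

noncomputable def tl (u : ℕ →₀ ℕ) : ℕ →₀ ℕ := fsOf (fun i => u (i+1)) (by
  obtain ⟨K, h⟩ := ex_bound u
  exact ⟨K, fun i hi => h _ (by omega)⟩)

noncomputable def cn (x : ℕ) (u : ℕ →₀ ℕ) : ℕ →₀ ℕ := fsOf (fun i => if i = 0 then x else u (i-1)) (by
  obtain ⟨K, h⟩ := ex_bound u
  exact ⟨K + 1, fun i hi => by rw [if_neg (by omega)]; exact h _ (by omega)⟩)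

lemma ws_tl (c : ℕ → ℕ) (u : ℕ →₀ ℕ) : ws c u = c 0 * u 0 + ws (fun i => c (i+1)) (tl u) := by
  obtain ⟨K, h⟩ := ex_bound u
  rw [ws_eq c u (K+1) (fun i hi => h i (by omega)), ws_eq _ (tl u) K (fun i hi => by
    simp only [tl, fsOf_apply]; exact h _ (by omega)), sum_range_succ', add_comm]
  simp [tl]

lemma ws_add (c d : ℕ → ℕ) (u : ℕ →₀ ℕ) : ws (fun i => c i + d i) u = ws c u + ws d u := by
  unfold ws
  rw [← Finsupp.sum_add]
  simp_rw [add_mul]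

noncomputable def W (t : Tr) : ℕ :=
  ws (fun i => i + 1) t.1 + ws (fun i => i + 1) t.2.1 + ws (fun i => 2 * (i + 1)) t.2.2
noncomputable def su (u : ℕ →₀ ℕ) : ℕ := ws (fun _ => 1) u

lemma ws_succ (u : ℕ →₀ ℕ) : ws (fun i => i + 1) u = ws (fun i => i) u + su u :=
  ws_add (fun i => i) (fun _ => 1) u
lemma ws_succ2 (u : ℕ →₀ ℕ) : ws (fun i => i + 1 + 1) u = ws (fun i => i + 1) u + su u :=
  ws_add (fun i => i + 1) (fun _ => 1) u

lemma pi_eq2 (m n : ℕ) :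
    bipartitePi m n = Nat.card {t : Tr // W t = n ∧ n + su t.1 ≤ m + su t.2.1} := by
  rw [pi_eq]
  have key : ∀ u v g, wn (u, v, g) = W (tl u, v, g) ∧
      wm (u, v, g) + su v = u 0 + wn (u, v, g) + su (tl u) := by
    intro u v g
    unfold wn wm W
    simp only
    rw [ws_tl (fun i => i) u, ws_tl (fun i => i+1) u, ws_succ2, ws_succ v]
    constructor <;> ring
  refine Nat.card_congr (Equiv.ofBijective
    (fun t => ⟨(tl t.1.1, t.1.2.1, t.1.2.2), by
      obtain ⟨⟨u, v, g⟩, h1, h2⟩ := t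
      obtain ⟨k1, k2⟩ := key u v g
      simp only
      omega⟩) ⟨?_, ?_⟩)
  · rintro ⟨⟨u, v, g⟩, h1, h2⟩ ⟨⟨u', v', g'⟩, h1', h2'⟩ he
    simp only [Subtype.mk.injEq, Prod.mk.injEq] at he ⊢
    obtain ⟨e1, rfl, rfl⟩ := he
    obtain ⟨k1, k2⟩ := key u v g
    obtain ⟨k1', k2'⟩ := key u' v g
    rw [e1] at k1 k2
    refine ⟨?_, rfl, rfl⟩
    ext i
    cases i with
    | zero => omega
    | succ i => exact DFunLike.congr_fun e1 i
  · rintro ⟨⟨u, v, g⟩, h1, h2⟩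
    simp only at h2
    have ht : tl (cn (m + su v - (n + su u)) u) = u := by
      ext i; simp [tl, cn]
    have h0 : cn (m + su v - (n + su u)) u 0 = m + su v - (n + su u) := by simp [cn]
    obtain ⟨k1, k2⟩ := key (cn (m + su v - (n + su u)) u) v g
    rw [ht] at k1 k2
    refine ⟨⟨(cn (m + su v - (n + su u)) u, v, g), by omega, by omega⟩, ?_⟩
    simp [ht]

lemma le_ws (c : ℕ → ℕ) (u : ℕ →₀ ℕ) (i : ℕ) : c i * u i ≤ ws c u := by
  by_cases h : u i = 0
  · simp [h]
  · exact Finset.single_le_sum (f := fun i => c i * u i) (fun _ _ => Nat.zero_le _) (Finsupp.mem_support_iff.mpr h)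

lemma fin_ws (c : ℕ → ℕ) (hc : ∀ i, i + 1 ≤ c i) (n : ℕ) : {u : ℕ →₀ ℕ | ws c u ≤ n}.Finite := by
  refine (Set.finite_Iic (fsOf (fun i => if i < n then n else 0) ⟨n, fun i hi => if_neg (by omega)⟩)).subset ?_
  intro u hu
  simp only [Set.mem_ofPred_eq, Set.mem_Iic] at hu ⊢
  intro i
  have h1 := (le_ws c u i).trans hu
  have h2 := hc i
  simp only [fsOf_apply]
  split_ifs with h
  · nlinarith [Nat.zero_le (u i), Nat.zero_le i, Nat.mul_le_mul_right (u i) h2]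
  · by_contra hne
    have : 1 ≤ u i := by omega
    nlinarith

lemma finX (n : ℕ) : {t : Tr | W t = n}.Finite := by
  refine ((fin_ws (fun i => i+1) (fun i => le_rfl) n).prod ((fin_ws (fun i => i+1) (fun i => le_rfl) n).prod
    (fin_ws (fun i => 2*(i+1)) (fun i => by omega) n))).subset ?_
  rintro ⟨u, v, g⟩ h
  simp only [Set.mem_ofPred_eq, W] at h
  simp only [Set.mem_prod, Set.mem_ofPred_eq]
  omega

noncomputable def X (n : ℕ) : Finset Tr := (finX n).toFinset
lemma mem_X {n : ℕ} {t : Tr} : t ∈ X n ↔ W t = n := by simp [X]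

noncomputable def cr (t : Tr) : ℤ := (su t.1 : ℤ) - su t.2.1
noncomputable def Lz (n : ℕ) (s : ℤ) : ℕ := #{t ∈ X n | cr t ≤ s}
noncomputable def Nz (n : ℕ) (s : ℤ) : ℕ := #{t ∈ X n | cr t = s}

lemma pi_Lz (m n : ℕ) : bipartitePi m n = Lz n (m - n) := by
  rw [pi_eq2, Lz]
  refine Nat.subtype_card _ ?_
  intro t
  rw [mem_filter, mem_X, cr]
  constructor <;> rintro ⟨h1, h2⟩ <;> refine ⟨h1, ?_⟩ <;> omega

lemma pi_comm (m n : ℕ) : bipartitePi m n = bipartitePi n m := by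
  unfold bipartitePi
  refine Nat.card_congr (Equiv.subtypeEquiv (Equiv.prodComm _ _) ?_)
  rintro ⟨a, b⟩
  simp only [Equiv.prodComm_apply, Prod.swap_prod_mk]
  constructor
  · rintro ⟨h1, h2, h3, h4, h5⟩
    exact ⟨h2, h1, sd_comm h3, h5, h4⟩
  · rintro ⟨h1, h2, h3, h4, h5⟩
    exact ⟨h2, h1, sd_comm h3, h5, h4⟩

def sw : Tr ≃ Tr where
  toFun t := (t.2.1, t.1, t.2.2)
  invFun t := (t.2.1, t.1, t.2.2)
  left_inv _ := rfl
  right_inv _ := rfl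

lemma W_sw (t : Tr) : W (sw t) = W t := by simp [W, sw]; ring
lemma cr_sw (t : Tr) : cr (sw t) = - cr t := by simp [cr, sw]

lemma Nz_neg (n : ℕ) (s : ℤ) : Nz n (-s) = Nz n s := by
  unfold Nz
  refine Finset.card_bij' (fun t _ => sw t) (fun t _ => sw t) ?_ ?_ ?_ ?_
  · intro t; simp only [mem_filter, mem_X, W_sw, cr_sw]; rintro ⟨h1, h2⟩; exact ⟨h1, by omega⟩
  · intro t; simp only [mem_filter, mem_X, W_sw, cr_sw]; rintro ⟨h1, h2⟩; exact ⟨h1, by omega⟩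
  · intro t _; rfl
  · intro t _; rfl

lemma Lz_add (n : ℕ) (s : ℤ) : Lz n s + Lz n (-s-1) = (X n).card := by
  have : Lz n (-s-1) = #{t ∈ X n | ¬ cr t ≤ s} := by
    unfold Lz
    refine Finset.card_bij' (fun t _ => sw t) (fun t _ => sw t) ?_ ?_ ?_ ?_
    · intro t; simp only [mem_filter, mem_X, W_sw, cr_sw]; rintro ⟨h1, h2⟩; exact ⟨h1, by omega⟩
    · intro t; simp only [mem_filter, mem_X, W_sw, cr_sw]; rintro ⟨h1, h2⟩; exact ⟨h1, by omega⟩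
    · intro t _; rfl
    · intro t _; rfl
  rw [this, Lz]
  exact card_filter_add_card_filter_not _

lemma Lz_succ (n : ℕ) (s : ℤ) : Lz n s = Nz n s + Lz n (s - 1) := by
  unfold Lz Nz
  rw [← card_union_of_disjoint]
  · congr 1; ext t; simp only [mem_union, mem_filter]
    constructor
    · rintro ⟨h1, h2⟩
      by_cases h : cr t = s
      · exact Or.inl ⟨h1, h⟩
      · exact Or.inr ⟨h1, by omega⟩
    · rintro (⟨h1, h2⟩ | ⟨h1, h2⟩) <;> exact ⟨h1, by omega⟩
  · rw [disjoint_left]; intro t; simp only [mem_filter]; rintro ⟨h1, h2⟩ ⟨h3, h4⟩; omega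

lemma cr_ge {n : ℕ} {t : Tr} (h : t ∈ X n) : -(n:ℤ) ≤ cr t := by
  rw [mem_X] at h
  unfold W at h
  rw [ws_succ t.2.1] at h
  unfold cr; omega

lemma Lz_zero (n : ℕ) (s : ℤ) (h : s < -n) : Lz n s = 0 := by
  unfold Lz
  rw [card_eq_zero, filter_eq_empty_iff]
  intro t ht
  have := cr_ge ht; omega

lemma Dbip_eq (m n : ℕ) : Dbip m n = Nz n (m - n) := by
  unfold Dbip
  rw [pi_Lz, Lz_succ]
  split_ifs with h
  · subst h
    rw [Lz_zero n _ (by push_cast; omega)]; simp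
  · rw [pi_Lz, Nat.cast_sub (by omega)]
    push_cast
    rw [show (m:ℤ) - 1 - n = m - n - 1 by ring]; ring

lemma Lz_neg (n s : ℕ) : Lz n (-s) = if s ≤ n then Lz (n - s) s else 0 := by
  split_ifs with h
  · have h1 := pi_Lz (n - s) n
    have h2 := pi_Lz n (n - s)
    rw [pi_comm, h2] at h1
    rw [Nat.cast_sub h] at h1
    rw [show (n:ℤ) - (n - s) = s by ring, show (n:ℤ) - s - n = -s by ring] at h1
    exact h1.symm
  · exact Lz_zero _ _ (by omega)

lemma Lz_le (n : ℕ) (s : ℤ) : Lz n s ≤ (X n).card := card_filter_le _ _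
lemma Nz_le (n : ℕ) (s : ℤ) : Nz n s ≤ (X n).card := card_filter_le _ _

/-- main combinatorial input -/
lemma rec1 (n s : ℕ) : (Lz n s : ℤ) = (X n).card - if s + 1 ≤ n then (Lz (n - (s+1)) (s+1 : ℕ) : ℤ) else 0 := by
  have h1 := Lz_add n s
  have h2 := Lz_neg n (s+1)
  rw [show -(s:ℤ) - 1 = -((s+1:ℕ):ℤ) by push_cast; ring, h2] at h1
  rw [← h1]
  split_ifs <;> simp

lemma rec2 (n s : ℕ) : (Nz n s : ℤ) = Lz n s - (X n).card + if s ≤ n then (Lz (n - s) s : ℤ) else 0 := by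
  have h1 := Lz_add n (s - 1)
  have h2 := Lz_neg n s
  have h3 := Lz_succ n s
  rw [show -((s:ℤ)-1) - 1 = -(s:ℤ) by ring, h2] at h1
  rw [← h1, h3]
  split_ifs <;> push_cast <;> ring

end BP

namespace BP

/-- finite Euler product -/
lemma fin_euler (q : ℂ) (hq : ‖q‖ < 1) (K : ℕ) :
    Summable (fun u : Fin K → ℕ => ‖∏ i : Fin K, (q ^ ((i:ℕ)+1)) ^ u i‖) ∧
    HasSum (fun u : Fin K → ℕ => ∏ i : Fin K, (q ^ ((i:ℕ)+1)) ^ u i) (∏ i ∈ range K, (1 - q ^ (i+1))⁻¹) := by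
  induction K with
  | zero =>
    constructor
    · exact (hasSum_fintype _).summable
    · simp
  | succ K ih =>
    obtain ⟨ih1, ih2⟩ := ih
    have hq' : ‖q ^ (K+1)‖ < 1 := by
      rw [norm_pow]; exact pow_lt_one₀ (norm_nonneg _) hq (by omega)
    have g1 : Summable (fun j : ℕ => ‖(q ^ (K+1)) ^ j‖) := by
      simp_rw [norm_pow (q^(K+1))]
      exact summable_geometric_of_lt_one (norm_nonneg _) hq'
    have g2 := hasSum_geometric_of_norm_lt_one hq'
    have e : ∀ x : ℕ × (Fin K → ℕ),
        ∏ i : Fin (K+1), (q ^ ((i:ℕ)+1)) ^ (Fin.snocEquiv (fun _ => ℕ) x) i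
        = (q ^ (K+1)) ^ x.1 * ∏ i : Fin K, (q ^ ((i:ℕ)+1)) ^ x.2 i := by
      intro x
      rw [Fin.prod_univ_castSucc, mul_comm]
      simp [Fin.snocEquiv]
    have s1 : Summable (fun x : ℕ × (Fin K → ℕ) => ‖(q ^ (K+1)) ^ x.1 * ∏ i : Fin K, (q ^ ((i:ℕ)+1)) ^ x.2 i‖) :=
      Summable.mul_norm (f := fun j : ℕ => (q ^ (K+1)) ^ j)
        (g := fun u : Fin K → ℕ => ∏ i : Fin K, (q ^ ((i:ℕ)+1)) ^ u i) g1 ih1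
    constructor
    · rw [← (Fin.snocEquiv (fun _ => ℕ)).summable_iff]
      refine s1.congr (fun x => ?_)
      rw [Function.comp_apply, e]
    · rw [← (Fin.snocEquiv (fun _ => ℕ)).hasSum_iff, prod_range_succ, mul_comm]
      have := g2.mul ih2 s1.of_norm
      refine this.congr_fun ?_
      intro x
      rw [Function.comp_apply, e]

noncomputable def emb (K : ℕ) (u : Fin K → ℕ) : ℕ →₀ ℕ :=
  fsOf (fun i => if h : i < K then u ⟨i, h⟩ else 0) ⟨K, fun i hi => dif_neg (by omega)⟩

lemma emb_inj (K : ℕ) : Function.Injective (emb K) := by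
  intro u v h
  ext i
  have := DFunLike.congr_fun h (i:ℕ)
  simpa [emb] using this

lemma emb_range (K : ℕ) (u : ℕ →₀ ℕ) (h : ∀ i, K ≤ i → u i = 0) : u ∈ Set.range (emb K) := by
  refine ⟨fun i => u i, ?_⟩
  ext i
  simp only [emb, fsOf_apply]
  split_ifs with hi
  · rfl
  · exact (h i (by omega)).symm

lemma ws_emb (K : ℕ) (u : Fin K → ℕ) (q : ℂ) :
    q ^ ws (fun i => i + 1) (emb K u) = ∏ i : Fin K, (q ^ ((i:ℕ)+1)) ^ u i := by
  rw [ws_eq _ _ K (fun i hi => by simp [emb]; omega), ← prod_pow_eq_pow_sum, Finset.prod_range]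
  refine prod_congr rfl (fun i _ => ?_)
  simp [emb, pow_mul]

noncomputable def PP (q : ℂ) : ℂ := ∏' n : ℕ, (1 - q ^ (n+1))

lemma PP_tendsto (q : ℂ) (hq : ‖q‖ < 1) :
    Tendsto (fun K => ∏ i ∈ range K, (1 - q ^ (i+1))) atTop (𝓝 (PP q)) :=
  (ModularForm.multipliable_one_sub_pow hq).hasProd.tendsto_prod_nat

lemma PP_ne (q : ℂ) (hq : ‖q‖ < 1) : PP q ≠ 0 := by
  unfold PP
  have := tprod_one_add_ne_zero_of_summable (f := fun n : ℕ => -q^(n+1)) ?_ ?_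
  · simpa [sub_eq_add_neg] using this
  · intro i h
    have h1 : q ^ (i+1) = 1 := by
      linear_combination -h
    have : ‖q ^ (i+1)‖ < 1 := by
      rw [norm_pow]; exact pow_lt_one₀ (norm_nonneg _) hq (by omega)
    rw [h1] at this; simp at this
  · simpa using (summable_nat_add_iff 1).mpr (summable_geometric_of_lt_one (norm_nonneg _) hq)

lemma PP_inv_tendsto (q : ℂ) (hq : ‖q‖ < 1) :
    Tendsto (fun K => ∏ i ∈ range K, (1 - q ^ (i+1))⁻¹) atTop (𝓝 (PP q)⁻¹) := by
  simpa [prod_inv_distrib] using (PP_tendsto q hq).inv₀ (PP_ne q hq)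

lemma euler_summable_real (r : ℝ) (h0 : 0 ≤ r) (h1 : r < 1) :
    Summable (fun u : ℕ →₀ ℕ => r ^ ws (fun i => i + 1) u) := by
  have hq : ‖(r:ℂ)‖ < 1 := by simpa [abs_of_nonneg h0] using h1
  obtain ⟨C, hC⟩ : ∃ C : ℝ, ∀ K, ‖∏ i ∈ range K, (1 - (r:ℂ) ^ (i+1))⁻¹‖ ≤ C := by
    obtain ⟨C, hC⟩ := (PP_inv_tendsto r hq).norm.bddAbove_range
    exact ⟨C, fun K => hC ⟨K, rfl⟩⟩
  refine summable_of_sum_le (c := C) (fun u => by positivity) ?_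
  intro S
  obtain ⟨K, hK⟩ : ∃ K, ∀ u ∈ S, ∀ i, K ≤ i → u i = 0 := by
    choose f hf using ex_bound
    exact ⟨S.sup f, fun u hu i hi => hf u i (le_trans (Finset.le_sup hu) hi)⟩
  have h2 := (fin_euler r hq K)
  have h3 : ∀ u : Fin K → ℕ, (((r ^ ws (fun i => i + 1) (emb K u) : ℝ)) : ℂ) = ∏ i : Fin K, ((r:ℂ) ^ ((i:ℕ)+1)) ^ u i := by
    intro u; push_cast; exact ws_emb K u r
  have h4 : HasSum (fun u : Fin K → ℕ => r ^ ws (fun i => i + 1) (emb K u)) (∏ i ∈ range K, (1 - r ^ (i+1))⁻¹) := by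
    rw [← Complex.hasSum_ofReal]
    push_cast
    simp_rw [ws_emb]
    exact h2.2
  have hsub : S ⊆ (S.preimage (emb K) (emb_inj K).injOn).image (emb K) := by
    intro u hu
    obtain ⟨v, rfl⟩ := emb_range K u (hK u hu)
    simp; exact ⟨v, hu, rfl⟩
  calc ∑ u ∈ S, r ^ ws (fun i => i + 1) u
      ≤ ∑ u ∈ (S.preimage (emb K) (emb_inj K).injOn).image (emb K), r ^ ws (fun i => i + 1) u :=
        sum_le_sum_of_subset_of_nonneg hsub (fun _ _ _ => by positivity)
    _ = ∑ u ∈ (S.preimage (emb K) (emb_inj K).injOn), r ^ ws (fun i => i + 1) (emb K u) :=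
        sum_image (fun _ _ _ _ h => emb_inj K h)
    _ ≤ ∏ i ∈ range K, (1 - r ^ (i+1))⁻¹ := sum_le_hasSum _ (fun _ _ => by positivity) h4
    _ ≤ C := by
      refine le_trans (le_abs_self _) ?_
      have := hC K
      rw [show (∏ i ∈ range K, (1 - (r:ℂ) ^ (i+1))⁻¹) = ((∏ i ∈ range K, (1 - r ^ (i+1))⁻¹ : ℝ) : ℂ) by push_cast; rfl,
        Complex.norm_real] at this
      exact this

lemma euler_summable (q : ℂ) (hq : ‖q‖ < 1) :
    Summable (fun u : ℕ →₀ ℕ => ‖q ^ ws (fun i => i + 1) u‖) := by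
  simp_rw [norm_pow]
  exact euler_summable_real _ (norm_nonneg _) hq

lemma euler (q : ℂ) (hq : ‖q‖ < 1) :
    HasSum (fun u : ℕ →₀ ℕ => q ^ ws (fun i => i + 1) u) (PP q)⁻¹ := by
  have hs := euler_summable q hq
  have h1 : Tendsto (fun K => ∑' u : ℕ →₀ ℕ, (Set.range (emb K)).indicator (fun u => q ^ ws (fun i => i + 1) u) u)
      atTop (𝓝 (∑' u : ℕ →₀ ℕ, q ^ ws (fun i => i + 1) u)) := by
    refine tendsto_tsum_of_dominated_convergence hs ?_ ?_
    · intro u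
      obtain ⟨K, hK⟩ := ex_bound u
      refine tendsto_const_nhds.congr' ?_
      filter_upwards [eventually_ge_atTop K] with L hL
      rw [Set.indicator_of_mem (emb_range L u (fun i hi => hK i (by omega)))]
    · refine Eventually.of_forall fun K u => ?_
      exact norm_indicator_le_norm_self _ _
  have h2 : ∀ K, ∑' u : ℕ →₀ ℕ, (Set.range (emb K)).indicator (fun u => q ^ ws (fun i => i + 1) u) u
      = ∏ i ∈ range K, (1 - q ^ (i+1))⁻¹ := by
    intro K
    rw [← _root_.tsum_subtype, tsum_range (fun u => q ^ ws (fun i => i + 1) u) (emb_inj K)]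
    simp_rw [ws_emb]
    exact (fin_euler q hq K).2.tsum_eq
  simp_rw [h2] at h1
  have := tendsto_nhds_unique h1 (PP_inv_tendsto q hq)
  rw [← this]
  exact hs.of_norm.hasSum

lemma ws_two (u : ℕ →₀ ℕ) : ws (fun i => 2 * (i+1)) u = 2 * ws (fun i => i+1) u := by
  unfold ws Finsupp.sum
  rw [mul_sum]; simp_rw [mul_assoc]

noncomputable def beta (q : ℂ) : ℂ := (PP q)⁻¹ * ((PP q)⁻¹ * (PP (q^2))⁻¹)

lemma norm_sq_lt {q : ℂ} (hq : ‖q‖ < 1) : ‖q^2‖ < 1 := by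
  rw [norm_pow]; exact pow_lt_one₀ (norm_nonneg _) hq (by omega)

lemma W_pow (q : ℂ) (t : Tr) : q ^ W t = q ^ ws (fun i => i + 1) t.1 *
    (q ^ ws (fun i => i + 1) t.2.1 * (q^2) ^ ws (fun i => i + 1) t.2.2) := by
  unfold W
  rw [ws_two, pow_add, pow_add, pow_mul, mul_assoc]

lemma sumTr (q : ℂ) (hq : ‖q‖ < 1) :
    Summable (fun t : Tr => ‖q ^ W t‖) ∧ HasSum (fun t : Tr => q ^ W t) (beta q) := by
  have s1 := euler_summable q hq
  have s2 := euler_summable (q^2) (norm_sq_lt hq)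
  have s12 := Summable.mul_norm s1 s2
  have s112 := Summable.mul_norm s1 s12
  constructor
  · exact s112.congr (fun t => by rw [W_pow])
  · have := (euler q hq).mul ((euler q hq).mul (euler _ (norm_sq_lt hq)) s12.of_norm) s112.of_norm
    have e : (fun t : Tr => q ^ W t) = fun x : Tr => q ^ ws (fun i => i + 1) x.1 *
      (q ^ ws (fun i => i + 1) x.2.1 * (q^2) ^ ws (fun i => i + 1) x.2.2) := funext (W_pow q)
    rw [e]
    exact this

lemma hasSum_X {E : Type*} [NormedAddCommGroup E] [CompleteSpace E] (f : Tr → E) (a : E)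
    (h : HasSum f a) : HasSum (fun n => ∑ t ∈ X n, f t) a := by
  have h1 : HasSum (f ∘ (Equiv.sigmaFiberEquiv W)) a := (Equiv.sigmaFiberEquiv W).hasSum_iff.mpr h
  refine h1.sigma (fun n => ?_)
  have h2 : HasSum (fun t : {t // t ∈ X n} => f t) (∑ t ∈ X n, f t) := by
    rw [← Finset.sum_coe_sort]
    exact hasSum_fintype _
  let e : {t // W t = n} ≃ {t // t ∈ X n} := Equiv.subtypeEquivRight (fun t => (mem_X).symm)
  exact (e.hasSum_iff (f := fun t : {t // t ∈ X n} => f t)).mpr h2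

end BP

namespace BP

lemma hasSum_card (q : ℂ) (hq : ‖q‖ < 1) : HasSum (fun n => ((X n).card : ℂ) * q ^ n) (beta q) := by
  refine (hasSum_X _ _ (sumTr q hq).2).congr_fun (fun n => ?_)
  rw [sum_congr rfl (fun t ht => by rw [mem_X.mp ht]), sum_const, nsmul_eq_mul]

lemma summable_card (r : ℝ) (h0 : 0 ≤ r) (h1 : r < 1) : Summable (fun n => ((X n).card : ℝ) * r ^ n) := by
  have hq : ‖(r:ℂ)‖ < 1 := by simpa [abs_of_nonneg h0] using h1
  have := (hasSum_card r hq).summable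
  rw [← Complex.summable_ofReal]
  push_cast; exact this

lemma summable_le_card (a : ℕ → ℕ) (ha : ∀ n, a n ≤ (X n).card) (q : ℂ) (hq : ‖q‖ < 1) :
    Summable (fun n => ‖(a n : ℂ) * q ^ n‖) := by
  refine (summable_card ‖q‖ (norm_nonneg _) hq).of_nonneg_of_le (fun n => norm_nonneg _) (fun n => ?_)
  rw [norm_mul, norm_pow, Complex.norm_natCast]
  have : (a n : ℝ) ≤ (X n).card := by exact_mod_cast ha n
  gcongr

noncomputable def Lq (s : ℕ) (q : ℂ) : ℂ := ∑' n, (Lz n s : ℂ) * q ^ n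

lemma Lq_hasSum (s : ℕ) (q : ℂ) (hq : ‖q‖ < 1) : HasSum (fun n => (Lz n s : ℂ) * q ^ n) (Lq s q) :=
  (summable_le_card (fun n => Lz n s) (fun n => Lz_le n s) q hq).of_norm.hasSum

lemma Lq_bound (q : ℂ) (hq : ‖q‖ < 1) : ∃ B, ∀ s, ‖Lq s q‖ ≤ B := by
  refine ⟨∑' n, ((X n).card : ℝ) * ‖q‖ ^ n, fun s => ?_⟩
  refine tsum_of_norm_bounded (summable_card ‖q‖ (norm_nonneg _) hq).hasSum (fun n => ?_)
  rw [norm_mul, norm_pow, Complex.norm_natCast]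
  have : (Lz n s : ℝ) ≤ (X n).card := by exact_mod_cast Lz_le n s
  gcongr

lemma hasSum_shift (k : ℕ) (a : ℕ → ℂ) (S q : ℂ) (h : HasSum (fun n => a n * q ^ n) S) :
    HasSum (fun n => (if k ≤ n then a (n - k) else 0) * q ^ n) (q ^ k * S) := by
  have inj : Function.Injective (fun n : ℕ => n + k) := fun a b h => by simpa using h
  rw [← inj.hasSum_iff]
  · refine (h.mul_left (q ^ k)).congr_fun (fun n => ?_)
    simp [pow_add]; ring
  · intro n hn
    have : ¬ k ≤ n := fun h => hn ⟨n - k, by simp; omega⟩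
    simp [this]

lemma Lq_rec (s : ℕ) (q : ℂ) (hq : ‖q‖ < 1) : Lq s q = beta q - q ^ (s+1) * Lq (s+1) q := by
  have h1 := hasSum_shift (s+1) (fun n => (Lz n ((s+1:ℕ):ℤ) : ℂ)) _ q (Lq_hasSum (s+1) q hq)
  have h2 := (hasSum_card q hq).sub h1
  refine (Lq_hasSum s q hq).unique (h2.congr_fun (fun n => ?_))
  have := rec1 n s
  have h3 : ((Lz n s : ℤ) : ℂ) = (((X n).card - if s+1 ≤ n then (Lz (n-(s+1)) (s+1:ℕ):ℤ) else 0 : ℤ) : ℂ) := by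
    rw [this]
  push_cast at h3 ⊢
  rw [h3]; ring

lemma Nq_hasSum (s : ℕ) (q : ℂ) (hq : ‖q‖ < 1) :
    HasSum (fun n => (Nz n s : ℂ) * q ^ n) (Lq s q - beta q + q ^ s * Lq s q) := by
  have h1 := hasSum_shift s (fun n => (Lz n s : ℂ)) _ q (Lq_hasSum s q hq)
  refine (((Lq_hasSum s q hq).sub (hasSum_card q hq)).add h1).congr_fun (fun n => ?_)
  have := rec2 n s
  have h3 : ((Nz n s : ℤ) : ℂ) = ((Lz n s - (X n).card + if s ≤ n then (Lz (n-s) s:ℤ) else 0 : ℤ) : ℂ) := by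
    rw [this]
  push_cast at h3 ⊢
  rw [h3]; ring

def tri : ℕ → ℕ
  | 0 => 0
  | n+1 => tri n + (n+1)

lemma le_tri (n : ℕ) : n ≤ tri n := by
  cases n with
  | zero => simp
  | succ n => simp [tri]

lemma norm_h_le (q : ℂ) (hq : ‖q‖ < 1) (n : ℕ) : ‖q ^ tri n‖ ≤ ‖q‖ ^ n := by
  rw [norm_pow]; exact pow_le_pow_of_le_one (norm_nonneg _) hq.le (le_tri n)

lemma Lq_iter (s : ℕ) (q : ℂ) (hq : ‖q‖ < 1) (K : ℕ) :
    Lq s q = beta q * (∑ l ∈ range K, (-1)^l * (q^s)^l * q ^ tri l) +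
      (-1)^K * (q^s)^K * q ^ tri K * Lq (s+K) q := by
  induction K with
  | zero => simp [tri]
  | succ K ih =>
    rw [ih, sum_range_succ, Lq_rec (s+K) q hq, ← add_assoc s K 1]
    simp only [tri]
    ring

lemma summable_h (q : ℂ) (hq : ‖q‖ < 1) (w : ℂ) (hw : ‖w‖ ≤ 1) :
    Summable (fun l => ‖(-1)^l * w^l * q ^ tri l‖) := by
  refine (summable_geometric_of_lt_one (norm_nonneg _) hq).of_nonneg_of_le (fun n => norm_nonneg _) (fun n => ?_)
  rw [norm_mul, norm_mul]
  have := norm_h_le q hq n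
  have h2 : ‖w^n‖ ≤ 1 := by rw [norm_pow]; exact pow_le_one₀ (norm_nonneg _) hw
  simp only [norm_pow, norm_neg, norm_one, one_pow, one_mul] at *
  calc _ ≤ 1 * ‖q‖^n := by gcongr
    _ = _ := one_mul _

noncomputable def Th (w q : ℂ) : ℂ := ∑' l : ℕ, (-1)^l * w^l * (q ^ tri l - q ^ tri (l+1))

lemma Lq_eq (s : ℕ) (q : ℂ) (hq : ‖q‖ < 1) :
    Lq s q = beta q * ∑' l, (-1)^l * (q^s)^l * q ^ tri l := by
  have hw : ‖q^s‖ ≤ 1 := by rw [norm_pow]; exact pow_le_one₀ (norm_nonneg _) hq.le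
  obtain ⟨B, hB⟩ := Lq_bound q hq
  have h1 := ((summable_h q hq (q^s) hw).of_norm.hasSum.tendsto_sum_nat).const_mul (beta q)
  have h2 : Tendsto (fun K => (-1)^K * (q^s)^K * q ^ tri K * Lq (s+K) q) atTop (𝓝 0) := by
    have h3 : Tendsto (fun K => ‖q‖^K * B) atTop (𝓝 0) := by
      simpa using (tendsto_pow_atTop_nhds_zero_of_lt_one (norm_nonneg q) hq).mul_const B
    refine squeeze_zero_norm (fun K => ?_) h3
    rw [norm_mul, norm_mul, norm_mul]
    have := norm_h_le q hq K
    have h2 : ‖(q^s)^K‖ ≤ 1 := by rw [norm_pow]; exact pow_le_one₀ (norm_nonneg _) hw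
    have h4 : ‖(-1:ℂ)^K‖ = 1 := by simp
    rw [h4]
    calc 1 * ‖(q^s)^K‖ * ‖q^tri K‖ * ‖Lq (s+K) q‖ ≤ 1 * 1 * ‖q‖^K * B := by
          gcongr; exact hB _
      _ = _ := by ring
  have h3 := h1.add h2
  rw [add_zero] at h3
  refine tendsto_nhds_unique (tendsto_const_nhds.congr (fun K => ?_)) h3
  exact Lq_iter s q hq K

lemma Nq_eq (s : ℕ) (q : ℂ) (hq : ‖q‖ < 1) :
    HasSum (fun n => (Nz n s : ℂ) * q ^ n) (q^s * (beta q * Th (q^s) q)) := by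
  have hw : ‖q^s‖ ≤ 1 := by rw [norm_pow]; exact pow_le_one₀ (norm_nonneg _) hq.le
  convert Nq_hasSum s q hq using 1
  rw [Lq_eq s q hq]
  have s1 := (summable_h q hq (q^s) hw).of_norm
  have s2 := (summable_nat_add_iff 1).mpr s1
  have e1 := s1.tsum_eq_zero_add
  have e2 : q^s * Th (q^s) q = q^s * (∑' l, (-1)^l * (q^s)^l * q ^ tri l) + ∑' l, (-1)^(l+1) * (q^s)^(l+1) * q ^ tri (l+1) := by
    rw [Th, ← tsum_mul_left, ← tsum_mul_left, ← (s1.mul_left _).tsum_add s2]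
    congr 1; ext l; ring
  simp only [tri, pow_zero, mul_one] at e1
  simp only [tri] at e2
  linear_combination beta q * e2 - beta q * e1

open MeasureTheory in
lemma coeff (a : ℕ → ℂ) (t : ℝ) (m : ℕ)
    (hs : Summable (fun n => ‖a n * Complex.exp (-(t:ℂ)) ^ n‖)) (F : ℝ → ℂ)
    (hF : ∀ θ : ℝ, HasSum (fun n => a n * Complex.exp (-(t + θ * Complex.I)) ^ n) (F θ)) :
    ∫ θ in (-Real.pi)..Real.pi, F θ * Complex.exp (m * (t + θ * Complex.I)) = 2 * Real.pi * a m := by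
  have h1 : HasSum (fun n => ∫ θ in (-Real.pi)..Real.pi, a n * Complex.exp (-(t + θ * Complex.I)) ^ n * Complex.exp (m * (t + θ * Complex.I))) (∫ θ in (-Real.pi)..Real.pi, ∑' n, a n * Complex.exp (-(t + θ * Complex.I)) ^ n * Complex.exp (m * (t + θ * Complex.I))) := by
    let f : ℕ → C(ℝ, ℂ) := fun n => ⟨fun θ => a n * Complex.exp (-(t + θ * Complex.I)) ^ n * Complex.exp (m * (t + θ * Complex.I)), by fun_prop⟩
    refine intervalIntegral.hasSum_intervalIntegral_of_summable_norm (f := f) ?_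
    refine (hs.mul_right (Real.exp (m * t))).of_nonneg_of_le (fun n => norm_nonneg _) (fun n => ?_)
    rw [ContinuousMap.norm_le _ (by positivity)]
    intro x
    simp [f, Complex.norm_exp]
  have h2 : ∀ θ : ℝ, ∑' n, a n * Complex.exp (-(t + θ * Complex.I)) ^ n * Complex.exp (m * (t + θ * Complex.I)) = F θ * Complex.exp (m * (t + θ * Complex.I)) := by
    intro θ; rw [tsum_mul_right, (hF θ).tsum_eq]
  simp_rw [h2] at h1
  refine h1.unique ?_
  convert hasSum_single m ?_ using 1
  · have : ∀ θ : ℝ, a m * Complex.exp (-(t + θ * Complex.I)) ^ m * Complex.exp (m * (t + θ * Complex.I)) = a m := by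
      intro θ
      rw [← Complex.exp_nat_mul, mul_assoc, ← Complex.exp_add,
        show (m:ℂ) * -(t + θ * Complex.I) + m * (t + θ * Complex.I) = 0 by ring]
      simp
    simp_rw [this]
    rw [intervalIntegral.integral_const]
    simp only [sub_neg_eq_add, Complex.real_smul]
    push_cast
    ring
  · intro n hn
    have : ∀ θ : ℝ, a n * Complex.exp (-(t + θ * Complex.I)) ^ n * Complex.exp (m * (t + θ * Complex.I)) = a n * Complex.exp (((m:ℂ)-n)*t) * Complex.exp ((((m:ℂ)-n) * Complex.I) * θ) := by
      intro θ
      rw [← Complex.exp_nat_mul, mul_assoc, mul_assoc, ← Complex.exp_add, ← Complex.exp_add]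
      ring_nf
    simp_rw [this]
    have hne : ((m:ℂ)-n) * Complex.I ≠ 0 := by
      refine mul_ne_zero (sub_ne_zero.mpr ?_) Complex.I_ne_zero
      exact_mod_cast hn.symm
    rw [intervalIntegral.integral_const_mul, integral_exp_mul_complex hne]
    have : Complex.exp (((m:ℂ)-n) * Complex.I * Real.pi) = Complex.exp (((m:ℂ)-n) * Complex.I * (-Real.pi : ℝ)) := by
      rw [Complex.exp_eq_exp_iff_exists_int]
      exact ⟨(m:ℤ)-n, by push_cast; ring⟩
    rw [this, sub_self]; simp

lemma norm_exp_neg (t θ : ℝ) : ‖Complex.exp (-(t + θ * Complex.I))‖ = Real.exp (-t) := by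
  simp [Complex.norm_exp]

/-- the integral formula -/
lemma Nz_integral (μ s : ℕ) (t : ℝ) (ht : 0 < t) :
    ∫ θ in (-Real.pi)..Real.pi, beta (Complex.exp (-(t + θ * Complex.I))) *
      Th (Complex.exp (-(t + θ * Complex.I)) ^ s) (Complex.exp (-(t + θ * Complex.I))) *
      Complex.exp (μ * (t + θ * Complex.I)) = 2 * Real.pi * (Nz (μ + s) s : ℂ) := by
  have hlt : ∀ θ : ℝ, ‖Complex.exp (-(t + θ * Complex.I))‖ < 1 := by
    intro θ; rw [norm_exp_neg]; simpa using ht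
  have h0 : ‖Complex.exp (-(t:ℂ))‖ < 1 := by simpa using hlt 0
  have := coeff (fun n => (Nz n s : ℂ)) t (μ + s) ?_ (fun θ => Complex.exp (-(t + θ * Complex.I)) ^ s * (beta (Complex.exp (-(t + θ * Complex.I))) *
      Th (Complex.exp (-(t + θ * Complex.I)) ^ s) (Complex.exp (-(t + θ * Complex.I))))) ?_
  · rw [← this]
    congr 1; ext θ
    rw [mul_comm (Complex.exp (-(t + θ * Complex.I)) ^ s), mul_assoc _ (Complex.exp (-(t + θ * Complex.I)) ^ s)]
    congr 1
    rw [← Complex.exp_nat_mul, ← Complex.exp_add]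
    push_cast; ring_nf
  · exact summable_le_card (fun n => Nz n s) (fun n => Nz_le n s) _ h0
  · intro θ
    exact Nq_eq s _ (hlt θ)

end BP

namespace BP

lemma sqrt_I_mul (x : ℂ) (hx : 0 < x.re) : Complex.sqrt (Complex.I * x) = Complex.sqrt Complex.I * Complex.sqrt x := by
  have hx0 : x ≠ 0 := by rintro rfl; simp at hx
  have h := Complex.abs_arg_lt_pi_div_two_iff.mpr (Or.inl hx)
  rw [abs_lt] at h
  unfold Complex.sqrt
  rw [Complex.cpow_def_of_ne_zero (mul_ne_zero Complex.I_ne_zero hx0), Complex.cpow_def_of_ne_zero Complex.I_ne_zero,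
    Complex.cpow_def_of_ne_zero hx0, ← Complex.exp_add, Complex.log_mul Complex.I_ne_zero hx0, add_mul]
  rw [Complex.arg_I]
  constructor <;> linarith [Real.pi_pos]

lemma csqrt_sq (x : ℂ) : Complex.sqrt x * Complex.sqrt x = x := by
  rw [← sq]
  simp [Complex.sqrt]

lemma csqrt_ne (x : ℂ) (hx : x ≠ 0) : Complex.sqrt x ≠ 0 := by
  intro h; apply hx; rw [← csqrt_sq x, h, mul_zero]

lemma eta_eq (z : ℂ) : ModularForm.eta z = Complex.exp (2 * Real.pi * Complex.I * z / 24) * PP (Complex.exp (2 * Real.pi * Complex.I * z)) := by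
  unfold ModularForm.eta PP
  simp_rw [ModularForm.eta_q_eq_pow]
  simp [Function.Periodic.qParam]

lemma PP_transf (τ : ℂ) (hτ : 0 < τ.re) :
    PP (Complex.exp (-(4 * Real.pi^2/τ))) * Complex.exp (-(Real.pi^2/(6*τ))) =
     Complex.sqrt (τ/(2*Real.pi)) * Complex.exp (-(τ/24)) * PP (Complex.exp (-τ)) := by
  have hp := Real.pi_pos
  have hpc : (Real.pi : ℂ) ≠ 0 := by exact_mod_cast hp.ne'
  have hτ0 : τ ≠ 0 := by rintro rfl; simp at hτ
  have hre : 0 < (τ/(2*Real.pi)).re := by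
    rw [show τ/(2*Real.pi) = τ / ((2*Real.pi : ℝ) : ℂ) by push_cast; rfl, Complex.div_ofReal_re]
    positivity
  have hz : Complex.I * (τ/(2*Real.pi)) ∈ UpperHalfPlane.upperHalfPlaneSet := by
    show 0 < (Complex.I * (τ/(2*Real.pi))).im
    rw [Complex.I_mul_im]; exact hre
  have h := ModularForm.eta_comp_eq_csqrt_I_inv hz
  simp only [Function.comp_apply, Pi.smul_apply, Pi.mul_apply, smul_eq_mul] at h
  rw [eta_eq, eta_eq, sqrt_I_mul _ hre] at h
  have hI := csqrt_ne _ Complex.I_ne_zero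
  rw [← mul_assoc, ← mul_assoc, ← mul_assoc, inv_mul_cancel₀ hI, one_mul] at h
  have e1 : 2 * (Real.pi:ℂ) * Complex.I * (Complex.I * (τ/(2*Real.pi))) = -τ := by
    field_simp; rw [Complex.I_sq]
  have e2 : 2 * (Real.pi:ℂ) * Complex.I * (-1 / (Complex.I * (τ/(2*Real.pi)))) = -(4 * Real.pi^2/τ) := by
    field_simp; ring
  rw [e1, e2, show -τ/24 = -(τ/24) by ring, show -(4 * (Real.pi:ℂ)^2/τ)/24 = -(Real.pi^2/(6*τ)) by field_simp; ring] at h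
  rw [← h]; ring

lemma PP_tendsto_one : Tendsto PP (𝓝 0) (𝓝 1) := by
  have := tendsto_tprod_one_add_of_dominated_convergence (𝓕 := 𝓝 0) (g := 0)
      (f := fun (q : ℂ) (n : ℕ) ↦ -q ^ (n + 1)) (bound := fun n ↦ (1 / 2 : ℝ) ^ (n + 1))
  simp only [Pi.zero_apply, norm_neg, norm_pow, add_zero, tprod_one] at this
  unfold PP
  simp_rw [sub_eq_add_neg]
  refine this
    (by simpa only [pow_succ'] using (summable_geometric_of_abs_lt_one (by norm_num)).mul_left _)
    (fun k ↦ by simpa using ((continuous_pow (M := ℂ) (k + 1)).tendsto 0).neg) ?_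
  filter_upwards [Metric.ball_mem_nhds (0 : ℂ) (by norm_num : (0 : ℝ) < 1 / 2)] with q hq k
  exact pow_le_pow_left₀ (norm_nonneg _) (mem_ball_zero_iff.mp hq).le _

def Cone : Set ℂ := {τ | 0 < τ.re ∧ |τ.im| ≤ τ.re}

noncomputable def EE (τ : ℂ) : ℂ := Complex.exp (-(τ/24)) * (PP (Complex.exp (-(4 * Real.pi^2/τ))))⁻¹

lemma Cone_normSq {τ : ℂ} (h : τ ∈ Cone) : Complex.normSq τ ≤ 2 * τ.re^2 := by
  have := sq_le_sq' (abs_le.mp h.2).1 (abs_le.mp h.2).2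
  rw [Complex.normSq_apply]; nlinarith

lemma EE_tendsto : Tendsto EE (𝓝[Cone] 0) (𝓝 1) := by
  have h1 : Tendsto (fun τ : ℂ => Complex.exp (-(τ/24))) (𝓝[Cone] 0) (𝓝 1) := by
    have : Continuous (fun τ : ℂ => Complex.exp (-(τ/24))) := by fun_prop
    simpa using (this.tendsto 0).mono_left nhdsWithin_le_nhds
  have h2 : Tendsto (fun τ : ℂ => Complex.exp (-(4 * Real.pi^2/τ))) (𝓝[Cone] 0) (𝓝 0) := by
    rw [tendsto_zero_iff_norm_tendsto_zero]
    have hre : Tendsto (fun τ : ℂ => τ.re) (𝓝[Cone] 0) (𝓝[>] 0) := by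
      rw [tendsto_nhdsWithin_iff]
      constructor
      · simpa using (Complex.continuous_re.tendsto 0).mono_left nhdsWithin_le_nhds
      · filter_upwards [self_mem_nhdsWithin] with τ hτ using hτ.1
    have h3 : Tendsto (fun τ : ℂ => Real.exp (-(τ.re)⁻¹)) (𝓝[Cone] 0) (𝓝 0) :=
      Real.tendsto_exp_neg_atTop_nhds_zero.comp (tendsto_inv_nhdsGT_zero.comp hre)
    refine squeeze_zero' (Eventually.of_forall fun _ => norm_nonneg _) ?_ h3
    filter_upwards [self_mem_nhdsWithin] with τ hτ
    rw [Complex.norm_exp]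
    apply Real.exp_le_exp.mpr
    rw [Complex.neg_re, neg_le_neg_iff, show 4 * (Real.pi:ℂ)^2/τ = ((4 * Real.pi^2 : ℝ) : ℂ) * τ⁻¹ by push_cast; rfl,
      Complex.re_ofReal_mul, Complex.inv_re]
    have h4 := Cone_normSq hτ
    have h5 := hτ.1
    have h6 : 0 < Complex.normSq τ := Complex.normSq_pos.mpr (by rintro rfl; simp at h5)
    have h7 : 2 ≤ 4 * Real.pi^2 := by nlinarith [Real.pi_gt_three]
    rw [inv_eq_one_div, ← mul_div_assoc, div_le_div_iff₀ h5 h6]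
    nlinarith [sq_nonneg τ.re]
  have h3 := h1.mul ((PP_tendsto_one.comp h2).inv₀ one_ne_zero)
  rw [inv_one, one_mul] at h3
  exact h3

lemma PP_inv_eq (τ : ℂ) (hτ : 0 < τ.re) : (PP (Complex.exp (-τ)))⁻¹ =
    Complex.sqrt (τ/(2*Real.pi)) * Complex.exp (Real.pi^2/(6*τ)) * EE τ := by
  have h := PP_transf τ hτ
  have h1 : ‖Complex.exp (-τ)‖ < 1 := by rw [Complex.norm_exp]; simpa using hτ
  have h2 : ‖Complex.exp (-(4 * Real.pi^2/τ))‖ < 1 := by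
    rw [Complex.norm_exp, Real.exp_lt_one_iff, Complex.neg_re, neg_lt_zero, show 4 * (Real.pi:ℂ)^2/τ = ((4 * Real.pi^2 : ℝ) : ℂ) * τ⁻¹ by push_cast; rfl,
      Complex.re_ofReal_mul, Complex.inv_re]
    have h6 : 0 < Complex.normSq τ := Complex.normSq_pos.mpr (by rintro rfl; simp at hτ)
    have := Real.pi_pos
    positivity
  have n1 := PP_ne _ h1
  have n2 := PP_ne _ h2
  rw [EE]
  rw [Complex.exp_neg (Real.pi^2/(6*τ))] at h
  have n3 := Complex.exp_ne_zero (Real.pi^2/(6*τ))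
  field_simp at h ⊢
  linear_combination h

noncomputable def EB (τ : ℂ) : ℂ := EE τ ^ 2 * EE (2*τ)

lemma EB_tendsto : Tendsto EB (𝓝[Cone] 0) (𝓝 1) := by
  have h1 : Tendsto (fun τ : ℂ => 2 * τ) (𝓝[Cone] 0) (𝓝[Cone] 0) := by
    rw [tendsto_nhdsWithin_iff]
    constructor
    · have : Continuous (fun τ : ℂ => 2 * τ) := by fun_prop
      simpa using (this.tendsto 0).mono_left nhdsWithin_le_nhds
    · filter_upwards [self_mem_nhdsWithin] with τ hτ
      have h1 := hτ.1; have h2 := hτ.2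
      refine ⟨by simpa using h1, ?_⟩
      simp [abs_mul]; exact h2
  have := (EE_tendsto.pow 2).mul (EE_tendsto.comp h1)
  rw [one_pow, one_mul] at this
  exact this

lemma beta_eq (τ : ℂ) (hτ : 0 < τ.re) : beta (Complex.exp (-τ)) =
    τ/(2*Real.pi) * Complex.sqrt (τ/Real.pi) * Complex.exp ((5*Real.pi^2/12 : ℝ)/τ) * EB τ := by
  have hτ0 : τ ≠ 0 := by rintro rfl; simp at hτ
  have h2 : 0 < (2*τ).re := by simpa using hτ
  have e : Complex.exp (-τ)^2 = Complex.exp (-(2*τ)) := by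
    rw [← Complex.exp_nat_mul]; congr 1; push_cast; ring
  rw [beta, e, PP_inv_eq τ hτ, PP_inv_eq (2*τ) h2, EB]
  rw [show 2*τ/(2*(Real.pi:ℂ)) = τ/Real.pi by field_simp]
  have e2 : Complex.exp ((5*Real.pi^2/12 : ℝ)/τ) = Complex.exp (Real.pi^2/(6*τ)) * (Complex.exp (Real.pi^2/(6*τ)) * Complex.exp (Real.pi^2/(6*(2*τ)))) := by
    rw [← Complex.exp_add, ← Complex.exp_add]; congr 1; push_cast; field_simp; ring
  rw [e2]
  linear_combination (csqrt_sq (τ/(2*Real.pi))) * Complex.exp (Real.pi^2/(6*τ)) * (Complex.exp (Real.pi^2/(6*τ)) * Complex.exp (Real.pi^2/(6*(2*τ)))) * Complex.sqrt (τ/Real.pi) * EE τ ^2 * EE (2*τ)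

end BP

namespace BP

lemma one_sub_bound (z : ℂ) (hz : ‖z‖ < 1) :
    ‖(1 - z)⁻¹‖ ≤ (1 - ‖z‖)⁻¹ * Real.exp (z.re - ‖z‖) := by
  have h1 := Complex.hasSum_re (Complex.hasSum_taylorSeries_neg_log hz)
  have hz' : ‖((‖z‖ : ℝ) : ℂ)‖ < 1 := by simpa using hz
  have h2 := Complex.hasSum_re (Complex.hasSum_taylorSeries_neg_log hz')
  have h3 := h2.sub h1
  have h4 := sum_le_hasSum {1} (fun i _ => ?_) h3
  · simp only [sum_singleton, Complex.neg_re, Complex.log_re] at h4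
    rw [show (1:ℂ) - ((‖z‖:ℝ):ℂ) = ((1 - ‖z‖ : ℝ) : ℂ) by push_cast; rfl, Complex.norm_real, Real.norm_of_nonneg (by linarith)] at h4
    simp at h4
    have hp : 0 < ‖1 - z‖ := by
      rw [norm_pos_iff, sub_ne_zero]; rintro rfl; simp at hz
    have hp2 : 0 < 1 - ‖z‖ := by linarith
    rw [norm_inv, ← Real.exp_log (inv_pos.mpr hp), ← Real.exp_log (inv_pos.mpr hp2), ← Real.exp_add, Real.exp_le_exp, Real.log_inv, Real.log_inv]
    linarith
  · rw [sub_nonneg]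
    have e : ∀ w : ℂ, (w ^ i / (i:ℂ)).re = (w^i).re / i := by
      intro w; rw [← Complex.ofReal_natCast, Complex.div_ofReal_re]
    rw [e, e, ← Complex.ofReal_pow, Complex.ofReal_re]
    have : (z^i).re ≤ ‖z‖^i := by rw [← norm_pow]; exact Complex.re_le_norm _
    gcongr

lemma PP_bound (q : ℂ) (hq : ‖q‖ < 1) :
    ‖(PP q)⁻¹‖ ≤ ‖(PP (‖q‖:ℝ))⁻¹‖ * Real.exp ((q/(1-q)).re - ‖q‖/(1-‖q‖)) := by
  have hq' : ‖((‖q‖ : ℝ) : ℂ)‖ < 1 := by simpa using hq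
  have h1 := (PP_inv_tendsto q hq).norm
  have h2 := (PP_inv_tendsto _ hq').norm
  have g1 : HasSum (fun i : ℕ => (q^(i+1)).re - ‖q‖^(i+1)) ((q/(1-q)).re - ‖q‖/(1-‖q‖)) := by
    have a1 := (hasSum_geometric_of_norm_lt_one hq).mul_left q
    have a2 := (hasSum_geometric_of_lt_one (norm_nonneg q) hq).mul_left ‖q‖
    have := (Complex.hasSum_re a1).sub a2
    simp_rw [← pow_succ'] at this
    simpa [div_eq_mul_inv] using this
  have g2 := (Real.continuous_exp.tendsto _).comp g1.tendsto_sum_nat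
  refine le_of_tendsto_of_tendsto' h1 (h2.mul g2) (fun K => ?_)
  rw [Function.comp_apply, Real.exp_sum, norm_prod, norm_prod, ← prod_mul_distrib]
  refine prod_le_prod (fun _ _ => norm_nonneg _) (fun i _ => ?_)
  have hi : ‖q^(i+1)‖ < 1 := by rw [norm_pow]; exact pow_lt_one₀ (norm_nonneg _) hq (by omega)
  have := one_sub_bound _ hi
  rw [show (1:ℂ) - ((‖q‖:ℝ):ℂ)^(i+1) = ((1 - ‖q^(i+1)‖ : ℝ) : ℂ) by push_cast [norm_pow]; rfl, ← Complex.ofReal_inv, Complex.norm_real, Real.norm_of_nonneg (inv_nonneg.mpr (by linarith))]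
  rwa [norm_pow] at this ⊢

lemma re_le_aux (q : ℂ) (hq : ‖q‖ < 1) : (q/(1-q)).re ≤ ‖q‖/(1-‖q‖) := by
  refine (Complex.re_le_norm _).trans ?_
  rw [norm_div]
  have : 1 - ‖q‖ ≤ ‖1 - q‖ := by
    have := norm_sub_norm_le (1:ℂ) q; simpa using this
  have h : 0 < 1 - ‖q‖ := by linarith
  gcongr

lemma PP_bound' (q : ℂ) (hq : ‖q‖ < 1) : ‖(PP q)⁻¹‖ ≤ ‖(PP (‖q‖:ℝ))⁻¹‖ := by
  refine (PP_bound q hq).trans ?_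
  have : Real.exp ((q/(1-q)).re - ‖q‖/(1-‖q‖)) ≤ 1 := by
    rw [Real.exp_le_one_iff]; linarith [re_le_aux q hq]
  exact mul_le_of_le_one_right (norm_nonneg _) this

lemma minor (t θ : ℝ) (ht : 0 < t) (ht2 : t ≤ 1/2) (h1 : t ≤ |θ|) (h2 : |θ| ≤ Real.pi) :
    ‖beta (Complex.exp (-(t + θ * Complex.I)))‖ ≤ ‖beta (Complex.exp (-(t:ℂ)))‖ * Real.exp (-(1/(12*t))) := by
  set q := Complex.exp (-(t + θ * Complex.I)) with hq
  have hn : ‖q‖ = Real.exp (-t) := norm_exp_neg t θ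
  set r := Real.exp (-t) with hr
  have r1 : r < 1 := by rw [hr]; simpa using ht
  have r2 : 1/2 ≤ r := by have := Real.add_one_le_exp (-t); linarith
  have r3 : 1 - r ≤ t := by have := Real.add_one_le_exp (-t); linarith
  have hq1 : ‖q‖ < 1 := by rw [hn]; exact r1
  have hre : q.re = r * Real.cos θ := by
    rw [hq, Complex.exp_re]; simp [hr]
  have him : q.im = - (r * Real.sin θ) := by
    rw [hq, Complex.exp_im]; simp [hr]
  have hcos : Real.cos θ ≤ 1 - 2/Real.pi^2 * θ^2 := by
    have a1 := Real.mul_le_sin (x := |θ|/2) (by positivity) (by linarith)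
    have a2 : (2/Real.pi*(|θ|/2))^2 ≤ Real.sin (|θ|/2)^2 := pow_le_pow_left₀ (by positivity) a1 2
    have a3 := Real.cos_sq' (|θ|/2)
    have a4 := Real.cos_two_mul (|θ|/2)
    rw [mul_div_cancel₀ _ (two_ne_zero), Real.cos_abs] at a4
    have a5 : (2/Real.pi*(|θ|/2))^2 = 1/Real.pi^2 * θ^2 := by
      rw [← sq_abs θ]; field_simp
    have a6 : 2/Real.pi^2 * θ^2 = 2 * (1/Real.pi^2 * θ^2) := by ring
    rw [a6, ← a5]; linarith
  have hnsq : ‖1 - q‖^2 = (1-r)^2 + 2*r*(1-Real.cos θ) := by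
    rw [← Complex.normSq_eq_norm_sq, Complex.normSq_apply]
    simp [hre, him]
    nlinarith [Real.sin_sq_add_cos_sq θ]
  have hpi : Real.pi^2 ≤ 10 := by nlinarith [Real.pi_lt_d2, Real.pi_pos]
  have hθ : (1-r)^2 ≤ θ^2 := by
    rw [← sq_abs θ]; apply pow_le_pow_left₀ (by linarith); linarith
  have hlow : (12/11*(1-r))^2 ≤ ‖1-q‖^2 := by
    rw [hnsq]
    have h3 : 1 / 5 * θ^2 ≤ 2/Real.pi^2 * θ^2 := by
      apply mul_le_mul_of_nonneg_right _ (sq_nonneg _)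
      rw [div_le_div_iff₀ (by norm_num) (by positivity)]; linarith
    have h4 : 1/5 * θ^2 ≤ 2 * r * (1 - Real.cos θ) := by nlinarith [sq_nonneg θ]
    nlinarith [sq_nonneg (1-r)]
  have hlow2 : 12/11*(1-r) ≤ ‖1-q‖ := by
    exact (sq_le_sq₀ (by linarith) (norm_nonneg _)).mp hlow
  have hre2 : (q/(1-q)).re ≤ 11/12 * (r/(1-r)) := by
    refine (Complex.re_le_norm _).trans ?_
    rw [norm_div, hn]
    calc r / ‖1-q‖ ≤ r / (12/11*(1-r)) := by
          have : 0 < 12/11*(1-r) := by linarith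
          gcongr
      _ = _ := by have : 1 - r ≠ 0 := by linarith
                  field_simp
  have hr5 : 1/(2*t) ≤ r/(1-r) := by
    rw [div_le_div_iff₀ (by linarith) (by linarith)]; nlinarith
  have hb := PP_bound q hq1
  rw [hn] at hb
  have hb2 : ‖(PP q)⁻¹‖ ≤ ‖(PP (r:ℂ))⁻¹‖ * Real.exp (-(1/(24*t))) := by
    refine hb.trans ?_
    gcongr
    have : 1/(24*t) = 1/12 * (1/(2*t)) := by field_simp; norm_num
    rw [this]; linarith
  have hc := PP_bound' (q^2) (norm_sq_lt hq1)
  rw [norm_pow, hn] at hc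
  push_cast at hc
  have er : Complex.exp (-(t:ℂ)) = (r:ℂ) := by rw [hr]; push_cast; rfl
  rw [er, beta, beta, norm_mul, norm_mul, norm_mul, norm_mul]
  have e3 : Real.exp (-(1/(12*t))) = Real.exp (-(1/(24*t))) * Real.exp (-(1/(24*t))) := by
    rw [← Real.exp_add]; congr 1; field_simp; norm_num
  rw [e3]
  calc _ ≤ (‖(PP (r:ℂ))⁻¹‖ * Real.exp (-(1/(24*t)))) * ((‖(PP (r:ℂ))⁻¹‖ * Real.exp (-(1/(24*t)))) * ‖(PP ((r:ℂ)^2))⁻¹‖) := by gcongr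
    _ = _ := by ring

end BP

namespace BP

lemma one_sub_pow_le (q : ℂ) (hq : ‖q‖ ≤ 1) (l : ℕ) : ‖1 - q^l‖ ≤ l * ‖1 - q‖ := by
  induction l with
  | zero => simp
  | succ l ih =>
    have e : 1 - q^(l+1) = (1 - q) + q * (1 - q^l) := by ring
    rw [e]
    refine (norm_add_le _ _).trans ?_
    rw [norm_mul]
    push_cast
    have := mul_le_mul hq ih (norm_nonneg _) zero_le_one
    linarith

lemma D4_bound (q y : ℂ) (hq : ‖q‖ ≤ 1) (hy : ‖y‖ ≤ 1) :
    ‖1 - 4*y*q + 6*y^2*q^3 - 4*y^3*q^6 + y^4*q^10‖ ≤ ‖1-y‖^4 + 14 * ‖1-q‖ * ‖1-y‖^2 + 123 * ‖1-q‖^2 := by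
  have e : 1 - 4*y*q + 6*y^2*q^3 - 4*y^3*q^6 + y^4*q^10 = (1-y)^4 + (1-q) * (1-y)^2 * (4*y - 10 * y^2)
    + (1-q)^2 * (6*y^2*(2+q) - 4*y^3*(5+4*q+3*q^2+2*q^3+q^4) + y^4*(9+8*q+7*q^2+6*q^3+5*q^4+4*q^5+3*q^6+2*q^7+q^8)) := by ring
  have hp : ∀ n, ‖q^n‖ ≤ 1 := fun n => by rw [norm_pow]; exact pow_le_one₀ (norm_nonneg _) hq
  have hyp : ∀ n, ‖y^n‖ ≤ 1 := fun n => by rw [norm_pow]; exact pow_le_one₀ (norm_nonneg _) hy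
  have nat : ∀ (k : ℕ) [k.AtLeastTwo] (x : ℂ) , ‖x‖ ≤ 1 → ‖(OfNat.ofNat k : ℂ) * x‖ ≤ OfNat.ofNat k := by
    intro k _ x hx
    rw [norm_mul, Complex.norm_ofNat]
    have : (0:ℝ) ≤ (OfNat.ofNat k) := Nat.ofNat_nonneg k
    nlinarith
  have b1 : ‖4*y - 10*y^2‖ ≤ 14 := by
    refine (norm_sub_le _ _).trans ?_
    linarith [nat 4 y hy, nat 10 _ (hyp 2)]
  have c1 : ‖2 + q‖ ≤ 3 := by
    refine (norm_add_le _ _).trans ?_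
    rw [Complex.norm_ofNat]; linarith
  have c2 : ‖5+4*q+3*q^2+2*q^3+q^4‖ ≤ 15 := by
    have := nat 4 q hq
    have := nat 3 _ (hp 2)
    have := nat 2 _ (hp 3)
    have := hp 4
    have h5 : ‖(5:ℂ)‖ = 5 := Complex.norm_ofNat 5
    linarith [norm_add_le (5+4*q+3*q^2+2*q^3) (q^4), norm_add_le (5+4*q+3*q^2) (2*q^3), norm_add_le (5+4*q) (3*q^2), norm_add_le 5 (4*q)]
  have c3 : ‖9+8*q+7*q^2+6*q^3+5*q^4+4*q^5+3*q^6+2*q^7+q^8‖ ≤ 45 := by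
    have := nat 8 q hq
    have := nat 7 _ (hp 2)
    have := nat 6 _ (hp 3)
    have := nat 5 _ (hp 4)
    have := nat 4 _ (hp 5)
    have := nat 3 _ (hp 6)
    have := nat 2 _ (hp 7)
    have := hp 8
    have h5 : ‖(9:ℂ)‖ = 9 := Complex.norm_ofNat 9
    linarith [norm_add_le (9+8*q+7*q^2+6*q^3+5*q^4+4*q^5+3*q^6+2*q^7) (q^8), norm_add_le (9+8*q+7*q^2+6*q^3+5*q^4+4*q^5+3*q^6) (2*q^7), norm_add_le (9+8*q+7*q^2+6*q^3+5*q^4+4*q^5) (3*q^6), norm_add_le (9+8*q+7*q^2+6*q^3+5*q^4) (4*q^5), norm_add_le (9+8*q+7*q^2+6*q^3) (5*q^4), norm_add_le (9+8*q+7*q^2) (6*q^3), norm_add_le (9+8*q) (7*q^2), norm_add_le 9 (8*q)]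
  have b2 : ‖6*y^2*(2+q) - 4*y^3*(5+4*q+3*q^2+2*q^3+q^4) + y^4*(9+8*q+7*q^2+6*q^3+5*q^4+4*q^5+3*q^6+2*q^7+q^8)‖ ≤ 123 := by
    refine (norm_add_le _ _).trans ?_
    have := norm_sub_le (6*y^2*(2+q)) (4*y^3*(5+4*q+3*q^2+2*q^3+q^4))
    have d1 : ‖6*y^2*(2+q)‖ ≤ 6 * 3 := by
      rw [norm_mul]; exact mul_le_mul (nat 6 _ (hyp 2)) c1 (norm_nonneg _) (by norm_num)
    have d2 : ‖4*y^3*(5+4*q+3*q^2+2*q^3+q^4)‖ ≤ 4 * 15 := by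
      rw [norm_mul]; exact mul_le_mul (nat 4 _ (hyp 3)) c2 (norm_nonneg _) (by norm_num)
    have d3 : ‖y^4*(9+8*q+7*q^2+6*q^3+5*q^4+4*q^5+3*q^6+2*q^7+q^8)‖ ≤ 1 * 45 := by
      rw [norm_mul]; exact mul_le_mul (hyp 4) c3 (norm_nonneg _) (by norm_num)
    linarith
  rw [e]
  refine (norm_add_le _ _).trans (add_le_add ((norm_add_le _ _).trans (add_le_add ?_ ?_)) ?_)
  · rw [norm_pow]
  · rw [norm_mul, norm_mul, norm_pow]
    calc _ ≤ ‖1-q‖ * ‖1-y‖^2 * 14 := by gcongr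
      _ = _ := by ring
  · rw [norm_mul, norm_pow]
    calc _ ≤ ‖1-q‖^2 * 123 := by gcongr
      _ = _ := by ring

lemma two_tri (l : ℕ) : 2 * tri l = l^2 + l := by
  induction l with
  | zero => rfl
  | succ l ih => simp only [tri]; rw [mul_add, ih]; ring

noncomputable def D4 (q : ℂ) (k : ℕ) : ℂ :=
  q^tri k - 4*q^tri (k+1) + 6*q^tri (k+2) - 4*q^tri (k+3) + q^tri (k+4)

lemma D4_eq (q : ℂ) (k : ℕ) : D4 q k = q^tri k * (1 - 4*q^k*q + 6*(q^k)^2*q^3 - 4*(q^k)^3*q^6 + (q^k)^4*q^10) := by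
  simp only [D4, tri]
  ring

lemma exp_aux (x : ℝ) (hx : 0 ≤ x) : Real.exp (-(x/2)) * (1 + x^2) ≤ 48 / (1+x) := by
  rw [Real.exp_neg, le_div_iff₀ (by positivity), mul_assoc, inv_mul_le_iff₀ (Real.exp_pos _)]
  have := Real.sum_le_exp_of_nonneg (x := x/2) (by positivity) 4
  simp [sum_range_succ, Nat.factorial] at this
  nlinarith [sq_nonneg x, pow_nonneg hx 3]

lemma D4_le (q : ℂ) (t : ℝ) (ht : 0 < t) (hq : ‖q‖ = Real.exp (-t)) (hd : ‖1 - q‖ ≤ 4 * t) (k : ℕ) :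
    ‖D4 q k‖ ≤ 500000 * t * (t / (1 + t * k^2)) := by
  have hq1 : ‖q‖ ≤ 1 := by rw [hq]; simpa using ht.le
  have hy : ‖q^k‖ ≤ 1 := by rw [norm_pow]; exact pow_le_one₀ (norm_nonneg _) hq1
  have h1 := D4_bound q (q^k) hq1 hy
  have h2 := one_sub_pow_le q hq1 k
  have h3 : ‖1 - q^k‖ ≤ k * (4*t) := h2.trans (by gcongr)
  set x := t * k^2 with hx
  have hx0 : 0 ≤ x := by positivity
  have h4 : ‖1 - 4*q^k*q + 6*(q^k)^2*q^3 - 4*(q^k)^3*q^6 + (q^k)^4*q^10‖ ≤ 4000 * t^2 * (1 + x^2) := by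
    calc _ ≤ _ := h1
      _ ≤ (k * (4*t))^4 + 14 * (4*t) * (k*(4*t))^2 + 123 * (4*t)^2 := by gcongr
      _ = t^2 * (256 * x^2 + 896 * x + 1968) := by rw [hx]; ring
      _ ≤ t^2 * (4000 * (1+x^2)) := by
        gcongr; nlinarith [sq_nonneg (x-1)]
      _ = _ := by ring
  have h5 : ‖q^tri k‖ ≤ Real.exp (-(x/2)) := by
    rw [norm_pow, hq, ← Real.exp_nat_mul, Real.exp_le_exp]
    have : (2 * tri k : ℝ) = k^2 + k := by exact_mod_cast two_tri k
    have hk : (0:ℝ) ≤ k := by positivity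
    rw [hx]; nlinarith
  rw [D4_eq, norm_mul]
  calc _ ≤ Real.exp (-(x/2)) * (4000 * t^2 * (1 + x^2)) := by gcongr
    _ = 4000 * t^2 * (Real.exp (-(x/2)) * (1+x^2)) := by ring
    _ ≤ 4000 * t^2 * (48 / (1+x)) := by gcongr; exact exp_aux x hx0
    _ = 192000 * (t * (t / (1+x))) := by ring
    _ ≤ 500000 * (t * (t / (1+x))) := by gcongr; norm_num
    _ = _ := by ring

lemma summable_g (q : ℂ) (hq : ‖q‖ < 1) (w : ℂ) (hw : ‖w‖ ≤ 1) (j : ℕ) :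
    Summable (fun l => ‖(-1)^l * w^l * (q ^ tri (l+j) - q ^ tri (l+j+1))‖) ∧
    ∑' l, ‖(-1)^l * w^l * (q ^ tri (l+j) - q ^ tri (l+j+1))‖ ≤ 2 / (1 - ‖q‖) := by
  have hs := (hasSum_geometric_of_lt_one (norm_nonneg _) hq).mul_left 2
  have hle : ∀ n : ℕ, ‖(-1)^n * w^n * (q ^ tri (n+j) - q ^ tri (n+j+1))‖ ≤ 2 * ‖q‖^n := by
    intro n
    rw [norm_mul, norm_mul]
    have h2 : ‖w^n‖ ≤ 1 := by rw [norm_pow]; exact pow_le_one₀ (norm_nonneg _) hw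
    have h3 : ∀ m, n ≤ m → ‖q^tri m‖ ≤ ‖q‖^n := fun m hm =>
      (norm_h_le q hq m).trans (pow_le_pow_of_le_one (norm_nonneg _) hq.le hm)
    have h4 := (norm_sub_le (q ^ tri (n+j)) (q ^ tri (n+j+1)))
    have h5 := h3 (n+j) (by omega)
    have h6 := h3 (n+j+1) (by omega)
    have h7 : ‖(-1:ℂ)^n‖ = 1 := by simp
    rw [h7]
    calc _ ≤ 1 * 1 * (2 * ‖q‖^n) := by gcongr; linarith
      _ = _ := by ring
  have hsm := hs.summable.of_nonneg_of_le (fun n => norm_nonneg _) hle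
  exact ⟨hsm, by rw [div_eq_mul_inv]; exact hasSum_le hle hsm.hasSum hs⟩

lemma Th_crude (q : ℂ) (hq : ‖q‖ < 1) (w : ℂ) (hw : ‖w‖ ≤ 1) : ‖Th w q‖ ≤ 2 / (1 - ‖q‖) := by
  have := summable_g q hq w hw 0
  exact (norm_tsum_le_tsum_norm this.1).trans this.2

lemma Th_abel (q : ℂ) (hq : ‖q‖ < 1) (w : ℂ) (hw : ‖w‖ ≤ 1) :
    HasSum (fun k => (-1)^k * w^(k+3) * D4 q k)
     ((1+w)^3 * Th w q - ((1-q) + w * (1-q) * (3-q-q^2) + w^2 * (1-q) * (q^3+q^4+q^5-3*q-3*q^2+3))) := by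
  have H : ∀ j, HasSum (fun l => (-1)^l * w^l * (q ^ tri (l+j) - q ^ tri (l+j+1)))
     (∑' l, (-1)^l * w^l * (q ^ tri (l+j) - q ^ tri (l+j+1))) := fun j => (summable_g q hq w hw j).1.of_norm.hasSum
  set S : ℕ → ℂ := fun j => ∑' l, (-1)^l * w^l * (q ^ tri (l+j) - q ^ tri (l+j+1)) with hS
  have R : ∀ j, S j = (q ^ tri j - q ^ tri (j+1)) - w * S (j+1) := by
    intro j
    have h1 := (H j).summable.tsum_eq_zero_add
    rw [hS]
    simp only
    rw [h1, ← tsum_mul_left, sub_eq_add_neg _ (∑' _, _), ← tsum_neg]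
    congr 1
    · simp
    · congr 1; ext l
      rw [show l + 1 + j = l + (j+1) by ring]
      ring
  have e0 : S 0 = Th w q := rfl
  have h := ((((H 0).sub ((H 1).mul_left 3)).add ((H 2).mul_left 3)).sub (H 3)).mul_left (w^3)
  change HasSum _ (w^3 * (S 0 - 3 * S 1 + 3 * S 2 - S 3)) at h
  have hv : (1+w)^3 * Th w q - ((1-q) + w * (1-q) * (3-q-q^2) + w^2 * (1-q) * (q^3+q^4+q^5-3*q-3*q^2+3))
      = w^3 * (S 0 - 3 * S 1 + 3 * S 2 - S 3) := by
    have r0 := R 0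
    have r1 := R 1
    have r2 := R 2
    simp only [tri] at r0 r1 r2
    rw [← e0]
    norm_num at r0 r1 r2
    linear_combination (1 + 3 * w + 3*w^2) * r0 - (w + 3 * w^2) * r1 + w^2 * r2
  rw [hv]
  refine h.congr_fun (fun k => ?_)
  simp only [D4, add_zero]
  ring

end BP

namespace BP

lemma w_low (τ : ℂ) (hτ : τ ∈ Cone) (s : ℕ) : 1/2 ≤ ‖1 + Complex.exp (-τ) ^ s‖ := by
  rw [← Complex.exp_nat_mul]
  set a := s * τ.re with ha
  set b := s * τ.im with hb
  have hs : (0:ℝ) ≤ s := by positivity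
  have hab : |b| ≤ a := by
    rw [hb, abs_mul, abs_of_nonneg hs]; exact mul_le_mul_of_nonneg_left hτ.2 hs
  have hre : (Complex.exp (s * -τ)).re = Real.exp (-a) * Real.cos b := by
    rw [Complex.exp_re]; simp [ha, hb]
  by_cases h : |b| ≤ Real.pi/2
  · have h1 : 0 ≤ Real.cos b := Real.cos_nonneg_of_mem_Icc (abs_le.mp h)
    have h2 := Complex.re_le_norm (1 + Complex.exp (s * -τ))
    rw [Complex.add_re, hre, Complex.one_re] at h2
    have := mul_nonneg (Real.exp_pos (-a)).le h1
    linarith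
  · have h1 : 1 ≤ a := by linarith [Real.pi_gt_three]
    have h2 : ‖Complex.exp (s * -τ)‖ = Real.exp (-a) := by
      rw [Complex.norm_exp]; simp [ha]
    have h3 : Real.exp (-a) ≤ 1/2 := by
      rw [Real.exp_neg, one_div]
      apply inv_anti₀ (by norm_num)
      linarith [Real.add_one_le_exp a]
    have h4 := norm_sub_norm_le (1:ℂ) (-Complex.exp (s * -τ))
    rw [norm_neg, h2, sub_neg_eq_add, norm_one] at h4
    linarith

noncomputable def sg (t : ℝ) : ℝ := ∑' k : ℕ, t / (1 + t * (k:ℝ)^2)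

lemma sg_term (t : ℝ) (ht : 0 < t) (ht1 : t ≤ 1) (k : ℕ) : t / (1 + t * (k:ℝ)^2) ≤ 2 * (1 / ((k+1:ℕ):ℝ)^2) := by
  rw [← mul_div_assoc, div_le_div_iff₀ (by positivity) (by positivity)]
  push_cast
  nlinarith [sq_nonneg ((k:ℝ)-1), mul_nonneg ht.le (sq_nonneg ((k:ℝ)-1))]

lemma sg_bd : Summable (fun k : ℕ => 2 * (1 / ((k+1:ℕ):ℝ)^2)) :=
  ((summable_nat_add_iff 1).mpr (Real.summable_one_div_nat_pow.mpr (one_lt_two))).mul_left 2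

lemma sg_summable (t : ℝ) (ht : 0 < t) (ht1 : t ≤ 1) : Summable (fun k : ℕ => t / (1 + t * (k:ℝ)^2)) :=
  sg_bd.of_nonneg_of_le (fun k => by positivity) (sg_term t ht ht1)

lemma sg_tendsto : Tendsto sg (𝓝[>] 0) (𝓝 0) := by
  have : Tendsto sg (𝓝[>] 0) (𝓝 (∑' _ : ℕ, (0:ℝ))) := by
    refine tendsto_tsum_of_dominated_convergence sg_bd ?_ ?_
    · intro k
      have : ContinuousAt (fun t : ℝ => t / (1 + t * (k:ℝ)^2)) 0 := by
        apply ContinuousAt.div₀ <;> [fun_prop; fun_prop; simp]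
      have := this.tendsto
      simp only [zero_mul, add_zero, zero_div] at this
      exact this.mono_left nhdsWithin_le_nhds
    · have : Set.Ioc (0:ℝ) 1 ∈ 𝓝[>] (0:ℝ) := Ioc_mem_nhdsGT one_pos
      filter_upwards [this] with t ht k
      have h0 := ht.1
      rw [Real.norm_of_nonneg (by positivity)]
      exact sg_term t ht.1 ht.2 k
  simpa using this

noncomputable def ep (t : ℝ) : ℝ := 2 * (392 * t + 500000 * sg t)

lemma ep_tendsto : Tendsto ep (𝓝[>] 0) (𝓝 0) := by
  have h1 : Tendsto (fun t : ℝ => t) (𝓝[>] 0) (𝓝 0) := tendsto_id.mono_left nhdsWithin_le_nhds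
  have := ((h1.const_mul 392).add (sg_tendsto.const_mul 500000)).const_mul 2
  simp only [mul_zero, add_zero] at this
  exact this

lemma Cone_norm {τ : ℂ} (h : τ ∈ Cone) : ‖τ‖ ≤ 2 * τ.re := by
  have h1 := Cone_normSq h
  have h2 := h.1
  rw [Complex.normSq_eq_norm_sq] at h1
  exact (sq_le_sq₀ (norm_nonneg _) (by positivity)).mp (by nlinarith)

lemma Th_asymp (τ : ℂ) (hτ : τ ∈ Cone) (h2 : τ.re ≤ 1/2) (s : ℕ) :
    ‖Th (Complex.exp (-τ) ^ s) (Complex.exp (-τ)) * (1 + Complex.exp (-τ)^s)^2 / τ - 1‖ ≤ ep τ.re := by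
  set t := τ.re with ht
  have ht0 : 0 < t := hτ.1
  have hτ0 : τ ≠ 0 := by rintro rfl; simp [ht] at ht0
  have hn : ‖τ‖ ≤ 2 * t := Cone_norm hτ
  have hlow := w_low τ hτ s
  set q := Complex.exp (-τ) with hqd
  set w := q^s with hw
  have hq : ‖q‖ = Real.exp (-t) := by rw [hqd, Complex.norm_exp]; simp [ht]
  have hq1 : ‖q‖ < 1 := by rw [hq]; simpa using ht0
  have hw1 : ‖w‖ ≤ 1 := by rw [hw, norm_pow]; exact pow_le_one₀ (norm_nonneg _) hq1.le
  have hd : ‖1-q‖ ≤ 4*t := by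
    have := Complex.norm_exp_sub_one_le (x := -τ) (by rw [norm_neg]; linarith)
    rw [norm_neg, ← norm_neg, neg_sub] at this; linarith
  have hd2 : ‖(1-q) - τ‖ ≤ 4*t^2 := by
    have := Complex.norm_exp_sub_one_sub_id_le (x := -τ) (by rw [norm_neg]; linarith)
    rw [norm_neg, ← norm_neg, show -(Complex.exp (-τ) - 1 - -τ) = (1-q) - τ by rw [← hqd]; ring] at this
    nlinarith [norm_nonneg τ]
  have hab := Th_abel q hq1 w hw1
  have hsum : ‖(1+w)^3 * Th w q - ((1-q) + w * (1-q) * (3-q-q^2) + w^2 * (1-q) * (q^3+q^4+q^5-3*q-3*q^2+3))‖ ≤ 500000 * t * sg t := by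
    rw [← hab.tsum_eq]
    refine tsum_of_norm_bounded ((sg_summable t ht0 (by linarith)).hasSum.mul_left (500000*t)) (fun k => ?_)
    rw [norm_mul, norm_mul, norm_pow, norm_neg, norm_one, one_pow, one_mul]
    have h3 : ‖w^(k+3)‖ ≤ 1 := by rw [norm_pow]; exact pow_le_one₀ (norm_nonneg _) hw1
    exact (mul_le_of_le_one_left (norm_nonneg _) h3).trans (D4_le q t ht0 hq hd k)
  have hP := one_sub_pow_le q hq1.le
  have p1 : ‖1-q‖^2 ≤ 16*t^2 := by nlinarith [norm_nonneg (1-q)]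
  have hb1 : ‖2-q-q^2‖ ≤ 3 * ‖1-q‖ := by
    have := hP 2
    rw [show 2-q-q^2 = (1-q) + (1-q^2) by ring]
    refine (norm_add_le _ _).trans ?_
    push_cast at this; linarith
  have hb2 : ‖q^3+q^4+q^5-3*q-3*q^2+3‖ ≤ 21 * ‖1-q‖ := by
    rw [show q^3+q^4+q^5-3*q-3*q^2+3 = 3*(1-q) + 3*(1-q^2) - (1-q^3) - (1-q^4) - (1-q^5) by ring]
    have a2 := hP 2
    have a3 := hP 3
    have a4 := hP 4
    have a5 := hP 5
    push_cast at a2 a3 a4 a5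
    have n3 : ∀ x : ℂ, ‖3*x‖ = 3*‖x‖ := fun x => by rw [norm_mul, Complex.norm_ofNat]
    have := norm_sub_le (3*(1-q) + 3*(1-q^2) - (1-q^3) - (1-q^4)) (1-q^5)
    have := norm_sub_le (3*(1-q) + 3*(1-q^2) - (1-q^3)) (1-q^4)
    have := norm_sub_le (3*(1-q) + 3*(1-q^2)) (1-q^3)
    have := norm_add_le (3*(1-q)) (3*(1-q^2))
    rw [n3, n3] at this
    linarith
  have hc1 : ‖w * ((1-q)*(3-q-q^2) - τ)‖ ≤ 52 * t^2 := by
    rw [norm_mul]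
    refine (mul_le_of_le_one_left (norm_nonneg _) hw1).trans ?_
    rw [show (1-q)*(3-q-q^2) - τ = ((1-q) - τ) + (1-q)*(2-q-q^2) by ring]
    refine (norm_add_le _ _).trans ?_
    rw [norm_mul]
    have := mul_le_mul_of_nonneg_left hb1 (norm_nonneg (1-q))
    nlinarith
  have hc2 : ‖w^2 * ((1-q) * (q^3+q^4+q^5-3*q-3*q^2+3))‖ ≤ 336 * t^2 := by
    rw [norm_mul]
    have h3 : ‖w^2‖ ≤ 1 := by rw [norm_pow]; exact pow_le_one₀ (norm_nonneg _) hw1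
    refine (mul_le_of_le_one_left (norm_nonneg _) h3).trans ?_
    rw [norm_mul]
    have := mul_le_mul_of_nonneg_left hb2 (norm_nonneg (1-q))
    nlinarith
  have htot : ‖(1+w)^3 * Th w q - τ * (1+w)‖ ≤ t * (392 * t + 500000 * sg t) := by
    rw [show (1+w)^3 * Th w q - τ * (1+w) = ((1+w)^3 * Th w q - ((1-q) + w * (1-q) * (3-q-q^2) + w^2 * (1-q) * (q^3+q^4+q^5-3*q-3*q^2+3))) + ((1-q) - τ) + w * ((1-q)*(3-q-q^2) - τ) + w^2 * ((1-q) * (q^3+q^4+q^5-3*q-3*q^2+3)) by ring]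
    refine (norm_add_le _ _).trans ?_
    have := norm_add_le ((1+w)^3 * Th w q - ((1-q) + w * (1-q) * (3-q-q^2) + w^2 * (1-q) * (q^3+q^4+q^5-3*q-3*q^2+3)) + ((1-q) - τ)) (w * ((1-q)*(3-q-q^2) - τ))
    have := norm_add_le ((1+w)^3 * Th w q - ((1-q) + w * (1-q) * (3-q-q^2) + w^2 * (1-q) * (q^3+q^4+q^5-3*q-3*q^2+3))) ((1-q) - τ)
    nlinarith
  have hw0 : 1 + w ≠ 0 := by
    intro h; rw [h, norm_zero] at hlow; norm_num at hlow
  have e : Th w q * (1+w)^2/τ - 1 = ((1+w)^3 * Th w q - τ * (1+w)) / (τ * (1+w)) := by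
    field_simp
  rw [e, norm_div, norm_mul]
  have hre : t ≤ ‖τ‖ := Complex.re_le_norm τ
  have hden : t * (1/2) ≤ ‖τ‖ * ‖1+w‖ := by gcongr
  have hpos : 0 < t * (1/2) := by positivity
  calc _ ≤ (t * (392 * t + 500000 * sg t)) / (t * (1/2)) := by
        apply div_le_div₀ ((norm_nonneg _).trans htot) htot hpos hden
    _ = ep t := by rw [ep]; field_simp

end BP

namespace BP

noncomputable def AA : ℝ := 5*Real.pi^2/12
lemma AA_pos : 0 < AA := by unfold AA; have := Real.pi_pos; positivity

noncomputable def qq (t θ : ℝ) : ℂ := Complex.exp (-(t + θ * Complex.I))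

lemma qq_norm (t θ : ℝ) : ‖qq t θ‖ = Real.exp (-t) := norm_exp_neg t θ
lemma qq_lt {t : ℝ} (ht : 0 < t) (θ : ℝ) : ‖qq t θ‖ < 1 := by rw [qq_norm]; simpa using ht

lemma cont_core (t : ℝ) (ht : 0 < t) (s : ℕ) :
    Continuous (fun θ : ℝ => beta (qq t θ) * Th (qq t θ ^ s) (qq t θ)) := by
  have hc : Continuous (fun θ : ℝ => qq t θ) := by unfold qq; fun_prop
  have h0 : ‖((Real.exp (-t) : ℝ) : ℂ)‖ < 1 := by
    rw [Complex.norm_real, Real.norm_of_nonneg (Real.exp_pos _).le]; simpa using ht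
  have h1 : Continuous (fun θ : ℝ => ∑' n, (Nz n s : ℂ) * qq t θ ^ n) := by
    refine continuous_tsum (fun n => by fun_prop)
      (summable_le_card (fun n => Nz n s) (fun n => Nz_le n s) _ h0) (fun n θ => ?_)
    rw [norm_mul, norm_mul, norm_pow, norm_pow, qq_norm, Complex.norm_real, Real.norm_of_nonneg (Real.exp_pos _).le]
  have e : (fun θ : ℝ => beta (qq t θ) * Th (qq t θ ^ s) (qq t θ)) =
      fun θ => (∑' n, (Nz n s : ℂ) * qq t θ ^ n) / qq t θ ^ s := by
    ext θ
    have hne : qq t θ ^ s ≠ 0 := pow_ne_zero _ (Complex.exp_ne_zero _)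
    rw [(Nq_eq s _ (qq_lt ht θ)).tsum_eq, mul_div_cancel_left₀ _ hne]
  rw [e]
  exact h1.div (hc.pow s) (fun θ => pow_ne_zero _ (Complex.exp_ne_zero _))

noncomputable def II (t : ℝ) (s : ℕ) (θ : ℝ) : ℂ :=
  beta (qq t θ) * Th (qq t θ ^ s) (qq t θ) * Complex.exp ((AA/t^2 : ℝ) * (t + θ * Complex.I))

lemma II_cont (t : ℝ) (ht : 0 < t) (s : ℕ) : Continuous (II t s) := by
  unfold II
  exact (cont_core t ht s).mul (by fun_prop)

noncomputable def ka (t : ℝ) : ℝ := Real.sqrt (t/AA)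
noncomputable def zz (t u : ℝ) : ℂ := 1 + (ka t * u : ℝ) * Complex.I
noncomputable def wt (t : ℝ) (s : ℕ) : ℝ := Real.exp (-t) ^ s
noncomputable def FT (s : ℕ) (τ : ℂ) : ℂ :=
  Th (Complex.exp (-τ) ^ s) (Complex.exp (-τ)) * (1 + Complex.exp (-τ)^s)^2 / τ

noncomputable def QQ (t : ℝ) (s : ℕ) (u : ℝ) : ℂ :=
  zz t u ^ 2 * Complex.sqrt (zz t u) * Complex.exp (-((u:ℂ)^2/zz t u)) * EB (t * zz t u) * FT s (t * zz t u)
    * ((1 + (wt t s : ℂ)) / (1 + Complex.exp (-(t * zz t u))^s))^2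

noncomputable def NN (t : ℝ) (s : ℕ) : ℝ :=
  t^2 * Real.sqrt (t/Real.pi) * Real.exp (2*AA/t) / (1 + wt t s)^2 / (2 * Real.pi)

lemma csqrt_real_mul (r : ℝ) (hr : 0 < r) (x : ℂ) (hx : x ≠ 0) :
    Complex.sqrt (r * x) = Real.sqrt r * Complex.sqrt x := by
  have hr0 : (r:ℂ) ≠ 0 := by exact_mod_cast hr.ne'
  have h1 : Complex.sqrt (r:ℂ) = Real.sqrt r := by
    rw [Complex.sqrt_of_nonneg (by exact_mod_cast hr.le)]; simp
  rw [← h1]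
  unfold Complex.sqrt
  rw [Complex.cpow_def_of_ne_zero (mul_ne_zero hr0 hx), Complex.cpow_def_of_ne_zero hr0,
    Complex.cpow_def_of_ne_zero hx, ← Complex.exp_add, Complex.log_ofReal_mul hr hx, Complex.ofReal_log hr.le, add_mul]

lemma zz_ne (t u : ℝ) : zz t u ≠ 0 := by
  intro h
  have := congrArg Complex.re h
  simp [zz] at this

lemma tz_cone (t u : ℝ) (ht : 0 < t) (h : |ka t * u| ≤ 1) : (t * zz t u : ℂ) ∈ Cone := by
  have h1 : (t * zz t u : ℂ).re = t := by simp [zz]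
  have h2 : (t * zz t u : ℂ).im = t * (ka t * u) := by simp [zz]
  refine ⟨by rw [h1]; exact ht, ?_⟩
  rw [h1, h2, abs_mul, abs_of_pos ht]
  exact mul_le_of_le_one_right ht.le h

lemma tz_re (t u : ℝ) : (t * zz t u : ℂ).re = t := by simp [zz]

lemma II_formula (t : ℝ) (ht : 0 < t) (s : ℕ) (u : ℝ) (h : |ka t * u| ≤ 1) :
    II t s (t * ka t * u) = NN t s * QQ t s u := by
  have hA := AA_pos
  have hcone := tz_cone t u ht h
  have hτ : (t:ℂ) + ((t * ka t * u : ℝ) : ℂ) * Complex.I = t * zz t u := by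
    unfold zz; push_cast; ring
  have hz := zz_ne t u
  have ht0 : (t:ℂ) ≠ 0 := by exact_mod_cast ht.ne'
  have hw : (1 + Complex.exp (-(t * zz t u))^s) ≠ 0 := by
    intro h0
    have := w_low _ hcone s
    rw [h0, norm_zero] at this; norm_num at this
  have hwt : 0 < 1 + wt t s := by unfold wt; positivity
  have hwt' : (1:ℂ) + wt t s ≠ 0 := by exact_mod_cast hwt.ne'
  unfold II qq
  rw [hτ, beta_eq _ (by rw [tz_re]; exact ht)]
  have hka : (ka t)^2 = t/AA := Real.sq_sqrt (by positivity)
  have hka' : (ka t : ℂ)^2 = t/AA := by exact_mod_cast hka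
  have hAc : (AA:ℂ) ≠ 0 := by exact_mod_cast hA.ne'
  have hexp : Complex.exp ((5*Real.pi^2/12 : ℝ)/(t * zz t u)) * Complex.exp ((AA/t^2 : ℝ) * (t * zz t u)) =
      (Real.exp (2*AA/t) : ℂ) * Complex.exp (-((u:ℂ)^2/zz t u)) := by
    rw [Complex.ofReal_exp, ← Complex.exp_add, ← Complex.exp_add]
    congr 1
    change ((AA:ℝ):ℂ)/_ + _ = _
    have hI : (zz t u - 1)^2 = -(t/AA*u^2) := by
      unfold zz; push_cast; 
      rw [← hka']; ring_nf; rw [Complex.I_sq]; ring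
    push_cast
    field_simp
    have hI2 : AA * (zz t u - 1)^2 = -(t*u^2) := by rw [hI]; field_simp
    linear_combination hI2
  have hsq : Complex.sqrt (t * zz t u / Real.pi) = Real.sqrt (t/Real.pi) * Complex.sqrt (zz t u) := by
    rw [← csqrt_real_mul _ (div_pos ht Real.pi_pos) _ hz]; congr 1; push_cast; ring
  have hTh : Th (Complex.exp (-(t * zz t u)) ^ s) (Complex.exp (-(t * zz t u))) = (t * zz t u) * FT s (t * zz t u) / (1 + Complex.exp (-(t * zz t u))^s)^2 := by
    unfold FT; field_simp
  rw [hTh, hsq, QQ, NN]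
  push_cast at hexp ⊢
  rw [div_pow]
  have hpi : (Real.pi:ℂ) ≠ 0 := by exact_mod_cast Real.pi_ne_zero
  generalize Complex.exp (5 * ↑Real.pi ^ 2 / 12 / (↑t * zz t u)) = E1 at *
  generalize Complex.exp (↑AA / ↑t ^ 2 * (↑t * zz t u)) = E2 at *
  generalize Complex.exp (2 * ↑AA / ↑t) = E3 at *
  generalize Complex.exp (-(↑u ^ 2 / zz t u)) = E4 at *
  field_simp
  linear_combination (Complex.sqrt (zz t u) * (Real.sqrt (t/Real.pi)) * EB (t * zz t u) * FT s (t * zz t u)) * hexp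

end BP

namespace BP

lemma zz_norm (t u : ℝ) (h : |ka t * u| ≤ 1) : ‖zz t u‖ ≤ 2 := by
  unfold zz
  refine (norm_add_le _ _).trans ?_
  rw [norm_mul, Complex.norm_I, Complex.norm_real, Real.norm_eq_abs]
  simp only [norm_one]; linarith

lemma csq_norm (t u : ℝ) (h : |ka t * u| ≤ 1) : ‖Complex.sqrt (zz t u)‖ ≤ 2 := by
  have h1 := zz_norm t u h
  have h2 : ‖Complex.sqrt (zz t u)‖^2 = ‖zz t u‖ := by
    rw [← norm_pow, pow_two, csqrt_sq]
  nlinarith [norm_nonneg (Complex.sqrt (zz t u))]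

lemma gauss_norm (t u : ℝ) (h : |ka t * u| ≤ 1) :
    ‖Complex.exp (-((u:ℂ)^2/zz t u))‖ ≤ Real.exp (-(1/2) * u^2) := by
  rw [Complex.norm_exp]
  apply Real.exp_le_exp.2
  have hn : Complex.normSq (zz t u) = 1 + (ka t * u)^2 := by
    simp [zz, Complex.normSq_apply]; ring
  have h2 : (ka t * u)^2 ≤ 1 := by
    rw [← sq_abs]; exact pow_le_one₀ (abs_nonneg _) h
  have : (-((u:ℂ)^2/zz t u)).re = -(u^2 / (1 + (ka t * u)^2)) := by
    rw [Complex.neg_re, Complex.div_re, hn]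
    have h1 : ((u:ℂ)^2).re = u^2 := by norm_cast
    have h3 : ((u:ℂ)^2).im = 0 := by norm_cast
    rw [h1, h3]
    simp [zz]
  rw [this]
  have : u^2/2 ≤ u^2/(1+(ka t * u)^2) := by
    apply div_le_div_of_nonneg_left (sq_nonneg _) (by positivity) (by linarith)
  linarith

lemma ratio_bd (t u : ℝ) (ht : 0 < t) (s : ℕ) (h : |ka t * u| ≤ 1) :
    ‖(1 + (wt t s : ℂ)) / (1 + Complex.exp (-(t * zz t u))^s) - 1‖ ≤ 2 * |ka t * u| := by
  have hl := w_low _ (tz_cone t u ht h) s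
  have hw : (1 + Complex.exp (-(t * zz t u))^s) ≠ 0 := by
    intro h0
    rw [h0, norm_zero] at hl; norm_num at hl
  have e1 : Complex.exp (-(t * zz t u))^s = wt t s * Complex.exp (Complex.I * ((-(s*t*(ka t * u)) : ℝ):ℂ)) := by
    unfold wt zz
    push_cast
    rw [← Complex.exp_nat_mul, ← Complex.exp_nat_mul, ← Complex.exp_add]
    congr 1; ring
  rw [div_sub_one hw, norm_div, div_le_iff₀ (by linarith)]
  have e2 : (1 + (wt t s : ℂ)) - (1 + Complex.exp (-(t * zz t u))^s) =
      -(wt t s * (Complex.exp (Complex.I * ((-(s*t*(ka t * u)) : ℝ):ℂ)) - 1)) := by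
    rw [e1]; ring
  have hx : wt t s * (s*t) ≤ 1 := by
    unfold wt
    rw [← Real.exp_nat_mul]
    have := Real.add_one_le_exp (s*t)
    have h3 : Real.exp (s * -t) * Real.exp (s*t) = 1 := by rw [← Real.exp_add]; simp
    have := Real.exp_pos (s * -t)
    nlinarith
  have hwp : 0 ≤ wt t s := by unfold wt; positivity
  have : ‖(1 + (wt t s : ℂ)) - (1 + Complex.exp (-(t * zz t u))^s)‖ ≤ |ka t * u| := by
    rw [e2, norm_neg, norm_mul, Complex.norm_real, Real.norm_of_nonneg hwp]
    calc _ ≤ wt t s * ‖(-(s*t*(ka t * u)) : ℝ)‖ :=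
          mul_le_mul_of_nonneg_left (Real.norm_exp_I_mul_ofReal_sub_one_le) hwp
      _ = (wt t s * (s*t)) * |ka t * u| := by
          rw [Real.norm_eq_abs, abs_neg, abs_mul, abs_of_nonneg (by positivity : 0 ≤ (s:ℝ)*t)]; ring
      _ ≤ _ := mul_le_of_le_one_left (abs_nonneg _) hx
  calc _ ≤ |ka t * u| := this
    _ ≤ _ := by nlinarith [abs_nonneg (ka t * u)]

lemma QQ_bd : ∀ᶠ t in 𝓝[>] (0:ℝ), ∀ s : ℕ, ∀ u : ℝ, |ka t * u| ≤ 1 →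
    ‖QQ t s u‖ ≤ 288 * Real.exp (-(1/2) * u^2) := by
  have hE : ∀ᶠ τ in 𝓝[Cone] (0:ℂ), ‖EB τ‖ ≤ 2 := by
    have := (EB_tendsto.norm).eventually (eventually_lt_nhds (b := 2) (by norm_num))
    exact this.mono fun x hx => le_of_lt hx
  obtain ⟨r, hr, hE⟩ := Metric.mem_nhdsWithin_iff.1 hE
  have hep : ∀ᶠ t in 𝓝[>] (0:ℝ), ep t ≤ 1 :=
    (ep_tendsto.eventually (eventually_lt_nhds (b := 1) (by norm_num))).mono fun x hx => le_of_lt hx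
  have ht2 : ∀ᶠ t in 𝓝[>] (0:ℝ), t < min (1/2) (r/2) :=
    (eventually_lt_nhds (by positivity)).filter_mono nhdsWithin_le_nhds
  filter_upwards [hep, ht2, self_mem_nhdsWithin] with t h1 h2 h3 s u hu
  have ht : 0 < t := h3
  have hc := tz_cone t u ht hu
  have hzn := zz_norm t u hu
  have hEB : ‖EB (t * zz t u)‖ ≤ 2 := by
    apply hE
    refine ⟨?_, hc⟩
    rw [mem_ball_zero_iff, norm_mul, Complex.norm_real, Real.norm_of_nonneg ht.le]
    have := lt_of_lt_of_le h2 (min_le_right _ _)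
    nlinarith
  have hFT : ‖FT s (t * zz t u)‖ ≤ 2 := by
    have := Th_asymp _ hc (by rw [tz_re]; exact (lt_of_lt_of_le h2 (min_le_left _ _)).le) s
    rw [tz_re] at this
    have h5 : ‖FT s (t * zz t u)‖ ≤ ‖FT s (t * zz t u) - 1‖ + ‖(1:ℂ)‖ := by
      simpa using norm_add_le (FT s (t * zz t u) - 1) 1
    unfold FT at *
    simp only [norm_one] at h5
    linarith
  have hR : ‖(1 + (wt t s : ℂ)) / (1 + Complex.exp (-(t * zz t u))^s)‖ ≤ 3 := by
    have := ratio_bd t u ht s hu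
    have h5 := norm_add_le ((1 + (wt t s : ℂ)) / (1 + Complex.exp (-(t * zz t u))^s) - 1) 1
    simp only [norm_one, sub_add_cancel] at h5
    linarith
  unfold QQ
  rw [norm_mul, norm_mul, norm_mul, norm_mul, norm_mul, norm_pow, norm_pow]
  have e : 288 * Real.exp (-(1/2) * u^2) = 2^2 * 2 * Real.exp (-(1/2) * u^2) * 2 * 2 * 3^2 := by ring
  rw [e]
  have a1 := csq_norm t u hu
  have a2 := gauss_norm t u hu
  gcongr

lemma ka_tendsto : Tendsto ka (𝓝[>] 0) (𝓝 0) := by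
  have : Continuous ka := by unfold ka; fun_prop
  have h := this.tendsto 0
  simp only [ka, zero_div, Real.sqrt_zero] at h
  exact h.mono_left nhdsWithin_le_nhds

abbrev LL : Filter (ℝ × ℕ) := 𝓝[>] (0:ℝ) ×ˢ (⊤ : Filter ℕ)

lemma LL_fst : Tendsto (fun p : ℝ × ℕ => p.1) LL (𝓝[>] 0) := tendsto_fst

lemma QQ_tendsto (u : ℝ) : Tendsto (fun p : ℝ × ℕ => QQ p.1 p.2 u) LL (𝓝 (Complex.exp (-(u:ℂ)^2))) := by
  have hku : Tendsto (fun p : ℝ × ℕ => ka p.1 * u) LL (𝓝 0) := by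
    simpa using (ka_tendsto.comp LL_fst).mul_const u
  have hku1 : ∀ᶠ p in LL, |ka p.1 * u| ≤ 1 := by
    have := hku.abs
    rw [abs_zero] at this
    exact (this.eventually (eventually_lt_nhds (b := 1) (by norm_num))).mono fun x hx => le_of_lt hx
  have hpos : ∀ᶠ p in LL, 0 < p.1 := LL_fst.eventually self_mem_nhdsWithin
  have hlt : ∀ᶠ p in LL, p.1 ≤ 1/2 := LL_fst.eventually
    (((eventually_le_nhds (by norm_num : (0:ℝ) < 1/2))).filter_mono nhdsWithin_le_nhds)
  have hz : Tendsto (fun p : ℝ × ℕ => zz p.1 u) LL (𝓝 1) := by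
    unfold zz
    have := ((Complex.continuous_ofReal.tendsto 0).comp hku).mul_const Complex.I
    simpa using this.const_add 1
  have ht0 : Tendsto (fun p : ℝ × ℕ => (p.1 : ℂ)) LL (𝓝 0) := by
    have := (Complex.continuous_ofReal.tendsto 0).comp (LL_fst.mono_right nhdsWithin_le_nhds)
    simpa [Function.comp_def] using this
  have htz : Tendsto (fun p : ℝ × ℕ => (p.1 : ℂ) * zz p.1 u) LL (𝓝[Cone] 0) := by
    refine tendsto_nhdsWithin_iff.2 ⟨by simpa using ht0.mul hz, ?_⟩
    filter_upwards [hku1, hpos] with p h1 h2 using tz_cone _ _ h2 h1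
  have hsq : Tendsto (fun p : ℝ × ℕ => Complex.sqrt (zz p.1 u)) LL (𝓝 1) := by
    have hc : ContinuousAt Complex.sqrt 1 := by
      unfold Complex.sqrt
      exact continuousAt_cpow_const (by simp [Complex.slitPlane])
    have := hc.tendsto.comp hz
    simpa [Function.comp_def] using this
  have hex : Tendsto (fun p : ℝ × ℕ => Complex.exp (-((u:ℂ)^2/zz p.1 u))) LL (𝓝 (Complex.exp (-(u:ℂ)^2))) := by
    have := ((tendsto_const_nhds (x := (u:ℂ)^2)).div hz one_ne_zero).neg.cexp
    simpa using this
  have hEB := EB_tendsto.comp htz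
  have hFT : Tendsto (fun p : ℝ × ℕ => FT p.2 (p.1 * zz p.1 u)) LL (𝓝 1) := by
    rw [tendsto_iff_norm_sub_tendsto_zero]
    refine squeeze_zero' (Eventually.of_forall fun _ => norm_nonneg _) ?_ (ep_tendsto.comp LL_fst)
    filter_upwards [hku1, hpos, hlt] with p h1 h2 h3
    have := Th_asymp _ (tz_cone p.1 u h2 h1) (by rw [tz_re]; exact h3) p.2
    rw [tz_re] at this
    exact this
  have hR : Tendsto (fun p : ℝ × ℕ => (1 + (wt p.1 p.2 : ℂ)) / (1 + Complex.exp (-(p.1 * zz p.1 u))^p.2)) LL (𝓝 1) := by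
    rw [tendsto_iff_norm_sub_tendsto_zero]
    have := (hku.abs).const_mul 2
    rw [abs_zero, mul_zero] at this
    refine squeeze_zero' (Eventually.of_forall fun _ => norm_nonneg _) ?_ this
    filter_upwards [hku1, hpos] with p h1 h2 using ratio_bd _ _ h2 _ h1
  have := (((((hz.pow 2).mul hsq).mul hex).mul hEB).mul hFT).mul (hR.pow 2)
  simpa [QQ] using this

noncomputable def JJ (p : ℝ × ℕ) (u : ℝ) : ℂ :=
  (Set.Ioc (-(1/ka p.1)) (1/ka p.1)).indicator (fun u => II p.1 p.2 (p.1 * ka p.1 * u) / NN p.1 p.2) u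

lemma NN_pos (t : ℝ) (ht : 0 < t) (s : ℕ) : 0 < NN t s := by
  unfold NN wt
  have := Real.pi_pos
  positivity

lemma ka_pos (t : ℝ) (ht : 0 < t) : 0 < ka t := by
  unfold ka; have := AA_pos; positivity

lemma JJ_eq (p : ℝ × ℕ) (hp : 0 < p.1) (u : ℝ) (h : u ∈ Set.Ioc (-(1/ka p.1)) (1/ka p.1)) :
    |ka p.1 * u| ≤ 1 ∧ JJ p u = QQ p.1 p.2 u := by
  have hk := ka_pos _ hp
  have h1 : |ka p.1 * u| ≤ 1 := by
    rw [abs_mul, abs_of_pos hk, ← le_div_iff₀' hk, abs_le]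
    exact ⟨h.1.le, h.2⟩
  refine ⟨h1, ?_⟩
  have hN : (NN p.1 p.2 : ℂ) ≠ 0 := by exact_mod_cast (NN_pos _ hp _).ne'
  rw [JJ, Set.indicator_of_mem h, II_formula _ hp _ _ h1, mul_div_cancel_left₀ _ hN]

lemma JJ_tendsto : Tendsto (fun p => ∫ u, JJ p u) LL (𝓝 (Real.sqrt Real.pi : ℝ)) := by
  have hpos : ∀ᶠ p in LL, 0 < p.1 := LL_fst.eventually self_mem_nhdsWithin
  have hg : ∫ u : ℝ, Complex.exp (-(u:ℂ)^2) = ((Real.sqrt Real.pi : ℝ) : ℂ) := by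
    have := integral_gaussian 1
    rw [div_one] at this
    rw [← this, ← integral_complex_ofReal]
    congr 1; ext u; push_cast; ring_nf
  rw [← hg]
  apply MeasureTheory.tendsto_integral_filter_of_dominated_convergence
    (fun u => 288 * Real.exp (-(1/2) * u^2))
  · filter_upwards [hpos] with p hp
    refine Measurable.aestronglyMeasurable ?_
    refine Measurable.indicator ?_ measurableSet_Ioc
    exact ((II_cont p.1 hp p.2).comp (by fun_prop)).measurable.div_const _
  · filter_upwards [hpos, LL_fst.eventually QQ_bd] with p hp hb
    refine Eventually.of_forall fun u => ?_
    by_cases h : u ∈ Set.Ioc (-(1/ka p.1)) (1/ka p.1)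
    · obtain ⟨h1, h2⟩ := JJ_eq p hp u h
      rw [h2]; exact hb _ _ h1
    · rw [JJ, Set.indicator_of_notMem h, norm_zero]; positivity
  · exact (integrable_exp_neg_mul_sq (by norm_num)).const_mul _
  · refine Eventually.of_forall fun u => ?_
    refine (QQ_tendsto u).congr' ?_
    have hku : Tendsto (fun p : ℝ × ℕ => ka p.1 * u) LL (𝓝 0) := by
      simpa using (ka_tendsto.comp LL_fst).mul_const u
    have hku1 : ∀ᶠ p in LL, |ka p.1 * u| < 1 := by
      have := hku.abs
      rw [abs_zero] at this
      exact this.eventually (eventually_lt_nhds (b := 1) (by norm_num))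
    filter_upwards [hpos, hku1] with p hp h1
    have hk := ka_pos _ hp
    refine (JJ_eq p hp u ?_).2.symm
    rw [abs_mul, abs_of_pos hk, ← lt_div_iff₀' hk, abs_lt] at h1
    exact ⟨h1.1, h1.2.le⟩

lemma II_central (p : ℝ × ℕ) (hp : 0 < p.1) :
    ∫ θ in (-p.1)..p.1, II p.1 p.2 θ = (p.1 * ka p.1 * NN p.1 p.2 : ℝ) * ∫ u, JJ p u := by
  have hk := ka_pos _ hp
  have hN : (NN p.1 p.2 : ℂ) ≠ 0 := by exact_mod_cast (NN_pos _ hp _).ne'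
  unfold JJ
  rw [MeasureTheory.integral_indicator measurableSet_Ioc,
    ← intervalIntegral.integral_of_le (by have : 0 < 1/ka p.1 := by positivity
                                          linarith),
    intervalIntegral.integral_div,
    intervalIntegral.integral_comp_mul_left _ (by positivity : p.1 * ka p.1 ≠ 0)]
  have e1 : p.1 * ka p.1 * (1/ka p.1) = p.1 := by field_simp
  have e2 : p.1 * ka p.1 * -(1/ka p.1) = -p.1 := by field_simp
  rw [e1, e2]
  rw [Complex.real_smul]
  have : (p.1:ℂ) ≠ 0 := by exact_mod_cast hp.ne'
  have : (ka p.1:ℂ) ≠ 0 := by exact_mod_cast hk.ne'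
  push_cast
  field_simp

end BP

namespace BP

noncomputable def MM (t : ℝ) (s : ℕ) : ℝ := t^4 * Real.exp (2*AA/t) / (1 + wt t s)^2

lemma MM_pos (t : ℝ) (ht : 0 < t) (s : ℕ) : 0 < MM t s := by
  unfold MM wt; positivity

lemma NM (t : ℝ) (ht : 0 < t) (s : ℕ) :
    t * ka t * NN t s * Real.sqrt Real.pi = MM t s * (1/(2*Real.pi*Real.sqrt AA)) := by
  have hA := AA_pos
  have hpi := Real.pi_pos
  have h1 : 0 < 1 + wt t s := by unfold wt; positivity
  unfold ka NN MM
  rw [Real.sqrt_div ht.le, Real.sqrt_div ht.le]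
  have h2 : 0 < Real.sqrt AA := Real.sqrt_pos.2 hA
  have h3 : 0 < Real.sqrt Real.pi := Real.sqrt_pos.2 hpi
  have h4 : Real.sqrt t * Real.sqrt t = t := Real.mul_self_sqrt ht.le
  field_simp
  rw [pow_two, h4]

lemma beta_small : ∀ᶠ t : ℝ in 𝓝[>] (0:ℝ), ‖beta (Complex.exp (-(t:ℂ)))‖ ≤ 2 * Real.exp (AA/t) := by
  have hE : ∀ᶠ τ in 𝓝[Cone] (0:ℂ), ‖EB τ‖ ≤ 2 := by
    have := (EB_tendsto.norm).eventually (eventually_lt_nhds (b := 2) (by norm_num))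
    exact this.mono fun x hx => le_of_lt hx
  have hT : Tendsto (fun t : ℝ => (t:ℂ)) (𝓝[>] 0) (𝓝[Cone] 0) := by
    refine tendsto_nhdsWithin_iff.2 ⟨?_, ?_⟩
    · have := (Complex.continuous_ofReal.tendsto 0).mono_left (nhdsWithin_le_nhds (s := Set.Ioi (0:ℝ)))
      simpa using this
    · filter_upwards [self_mem_nhdsWithin] with t ht
      have ht' : 0 < t := ht
      exact ⟨by simpa using ht', by simpa using ht'.le⟩
  have ht2 : ∀ᶠ t in 𝓝[>] (0:ℝ), t < 1 :=
    (eventually_lt_nhds (by norm_num)).filter_mono nhdsWithin_le_nhds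
  filter_upwards [hT.eventually hE, ht2, self_mem_nhdsWithin] with t h1 h2 h3
  have ht : 0 < t := h3
  have hpi := Real.pi_gt_three
  rw [beta_eq _ (by simpa using ht)]
  have a1 : ‖(t:ℂ)/(2*Real.pi)‖ ≤ 1 := by
    have : (t:ℂ)/(2*Real.pi) = ((t/(2*Real.pi) : ℝ) : ℂ) := by push_cast; rfl
    rw [this, Complex.norm_real, Real.norm_of_nonneg (by positivity), div_le_one (by positivity)]
    linarith
  have a2 : ‖Complex.sqrt ((t:ℂ)/Real.pi)‖ ≤ 1 := by
    have h4 : ‖Complex.sqrt ((t:ℂ)/Real.pi)‖^2 = t/Real.pi := by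
      rw [← norm_pow, pow_two, csqrt_sq]
      have : (t:ℂ)/(Real.pi) = ((t/(Real.pi) : ℝ) : ℂ) := by push_cast; rfl
      rw [this, Complex.norm_real, Real.norm_of_nonneg (by positivity)]
    have h5 : t/Real.pi ≤ 1 := by rw [div_le_one (by positivity)]; linarith
    nlinarith [norm_nonneg (Complex.sqrt ((t:ℂ)/Real.pi))]
  have a3 : ‖Complex.exp ((5*Real.pi^2/12:ℝ)/(t:ℂ))‖ = Real.exp (AA/t) := by
    rw [Complex.norm_exp]; congr 1; rw [← Complex.ofReal_div, Complex.ofReal_re]; rfl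
  rw [norm_mul, norm_mul, norm_mul, a3]
  calc _ ≤ 1 * 1 * Real.exp (AA/t) * 2 := by gcongr
    _ = _ := by ring

lemma II_outer : ∀ᶠ t in 𝓝[>] (0:ℝ), t ≤ 1/2 ∧ ∀ s : ℕ, ∀ θ : ℝ, t ≤ |θ| → |θ| ≤ Real.pi →
    ‖II t s θ‖ ≤ 8/t * Real.exp (2*AA/t) * Real.exp (-(1/(12*t))) := by
  have ht2 : ∀ᶠ t in 𝓝[>] (0:ℝ), t < 1/2 :=
    (eventually_lt_nhds (by norm_num)).filter_mono nhdsWithin_le_nhds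
  filter_upwards [beta_small, ht2, self_mem_nhdsWithin] with t h1 h2 h3
  refine ⟨h2.le, fun s θ k1 k2 => ?_⟩
  have ht : 0 < t := h3
  have b1 := minor t θ ht h2.le k1 k2
  have b2 := Th_crude (qq t θ) (qq_lt ht θ) (qq t θ ^ s) (by
    rw [norm_pow]; exact pow_le_one₀ (norm_nonneg _) (qq_lt ht θ).le)
  rw [qq_norm] at b2
  have b3 : 2/(1 - Real.exp (-t)) ≤ 4/t := by
    have : t/2 ≤ 1 - Real.exp (-t) := by
      have h5 := Real.add_one_le_exp t
      have h6 : Real.exp (-t) * Real.exp t = 1 := by rw [← Real.exp_add]; simp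
      have h7 := Real.exp_pos (-t)
      nlinarith
    rw [div_le_div_iff₀ (by linarith) ht]; linarith
  have b4 : ‖Complex.exp ((AA/t^2 : ℝ) * (t + θ * Complex.I))‖ = Real.exp (AA/t) := by
    rw [Complex.norm_exp]; congr 1
    rw [Complex.re_ofReal_mul]; simp; field_simp
  unfold II
  rw [norm_mul, norm_mul, b4]
  calc _ ≤ (2 * Real.exp (AA/t) * Real.exp (-(1/(12*t)))) * (4/t) * Real.exp (AA/t) := by
        gcongr
        · exact b1.trans (by gcongr)
        · exact b2.trans b3
    _ = 8/t * (Real.exp (AA/t) * Real.exp (AA/t)) * Real.exp (-(1/(12*t))) := by ring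
    _ = _ := by rw [← Real.exp_add]; congr 3; ring

lemma decay : Tendsto (fun t : ℝ => 256 * ((t⁻¹)^5 * Real.exp (-(1/(12*t))))) (𝓝[>] 0) (𝓝 0) := by
  have h := Real.tendsto_pow_mul_exp_neg_atTop_nhds_zero 5
  have h1 : Tendsto (fun t : ℝ => t⁻¹ / 12) (𝓝[>] 0) atTop :=
    tendsto_inv_nhdsGT_zero.atTop_div_const (by norm_num)
  have h2 := (h.comp h1).const_mul (256 * 12^5)
  rw [mul_zero] at h2
  refine h2.congr fun t => ?_
  simp only [Function.comp]
  have : -(1/(12*t)) = -(t⁻¹/12) := by rw [one_div, mul_inv]; ring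
  rw [this]; ring

lemma outer_ratio : ∀ᶠ p in LL,
    ‖((∫ θ in (-Real.pi)..Real.pi, II p.1 p.2 θ) - ∫ θ in (-p.1)..p.1, II p.1 p.2 θ) / (MM p.1 p.2 : ℂ)‖ ≤
      256 * ((p.1⁻¹)^5 * Real.exp (-(1/(12*p.1)))) := by
  have hpos : ∀ᶠ p in LL, 0 < p.1 := LL_fst.eventually self_mem_nhdsWithin
  filter_upwards [hpos, LL_fst.eventually II_outer] with p hp ⟨hl, hb⟩
  obtain ⟨t, s⟩ := p
  simp only at *
  have hpi := Real.pi_gt_three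
  have hpi4 := Real.pi_le_four
  have hc := II_cont t hp s
  have hint : ∀ a b, IntervalIntegrable (II t s) MeasureTheory.volume a b := fun a b => hc.intervalIntegrable a b
  have e : (∫ θ in (-Real.pi)..Real.pi, II t s θ) - ∫ θ in (-t)..t, II t s θ =
      (∫ θ in (-Real.pi)..(-t), II t s θ) + ∫ θ in t..Real.pi, II t s θ := by
    rw [← intervalIntegral.integral_add_adjacent_intervals (hint (-Real.pi) (-t)) (hint (-t) Real.pi),
      ← intervalIntegral.integral_add_adjacent_intervals (hint (-t) t) (hint t Real.pi)]
    ring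
  have hB := hb s
  set B := 8/t * Real.exp (2*AA/t) * Real.exp (-(1/(12*t))) with hBdef
  have hBp : 0 ≤ B := by positivity
  have i1 : ‖∫ θ in (-Real.pi)..(-t), II t s θ‖ ≤ B * |(-t) - (-Real.pi)| := by
    apply intervalIntegral.norm_integral_le_of_norm_le_const
    intro x hx
    rw [Set.uIoc_of_le (by linarith)] at hx
    have : |x| = -x := abs_of_nonpos (by linarith [hx.2])
    exact hB x (by linarith [hx.2]) (by linarith [hx.1])
  have i2 : ‖∫ θ in t..Real.pi, II t s θ‖ ≤ B * |Real.pi - t| := by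
    apply intervalIntegral.norm_integral_le_of_norm_le_const
    intro x hx
    rw [Set.uIoc_of_le (by linarith)] at hx
    have : |x| = x := abs_of_nonneg (by linarith [hx.1])
    exact hB x (by linarith [hx.1]) (by linarith [hx.2])
  have j1 : |(-t) - (-Real.pi)| ≤ 4 := by rw [abs_of_nonneg] <;> linarith
  have j2 : |Real.pi - t| ≤ 4 := by rw [abs_of_nonneg] <;> linarith
  have hM := MM_pos t hp s
  rw [e, norm_div, Complex.norm_real, Real.norm_of_nonneg hM.le, div_le_iff₀ hM]
  have hw : 0 ≤ wt t s := by unfold wt; positivity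
  have hw1 : wt t s ≤ 1 := by
    unfold wt; exact pow_le_one₀ (Real.exp_pos _).le (by simpa using hp.le)
  have hM2 : t^4 * Real.exp (2*AA/t) / 4 ≤ MM t s := by
    unfold MM
    apply div_le_div_of_nonneg_left (by positivity) (by positivity)
    nlinarith
  calc _ ≤ B * 4 + B * 4 := (norm_add_le _ _).trans (add_le_add
          (i1.trans (mul_le_mul_of_nonneg_left j1 hBp)) (i2.trans (mul_le_mul_of_nonneg_left j2 hBp)))
    _ = 256 * (t⁻¹^5 * Real.exp (-(1/(12*t)))) * (t^4 * Real.exp (2*AA/t) / 4) := by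
        rw [hBdef]; field_simp; ring
    _ ≤ _ := by gcongr

lemma main_lim : Tendsto (fun p : ℝ × ℕ => (∫ θ in (-Real.pi)..Real.pi, II p.1 p.2 θ) / (MM p.1 p.2 : ℂ)) LL
    (𝓝 ((1/(2*Real.pi*Real.sqrt AA) : ℝ) : ℂ)) := by
  have hpos : ∀ᶠ p in LL, 0 < p.1 := LL_fst.eventually self_mem_nhdsWithin
  have h1 : Tendsto (fun p : ℝ × ℕ => ((∫ θ in (-Real.pi)..Real.pi, II p.1 p.2 θ) - ∫ θ in (-p.1)..p.1, II p.1 p.2 θ) / (MM p.1 p.2 : ℂ)) LL (𝓝 0) :=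
    squeeze_zero_norm' outer_ratio (decay.comp LL_fst)
  have hsp : ((Real.sqrt Real.pi : ℝ) : ℂ) ≠ 0 := by
    exact_mod_cast (Real.sqrt_pos.2 Real.pi_pos).ne'
  have h2 : Tendsto (fun p : ℝ × ℕ => (∫ θ in (-p.1)..p.1, II p.1 p.2 θ) / (MM p.1 p.2 : ℂ)) LL
      (𝓝 ((1/(2*Real.pi*Real.sqrt AA) : ℝ) : ℂ)) := by
    have := (JJ_tendsto.div_const ((Real.sqrt Real.pi : ℝ) : ℂ)).const_mul ((1/(2*Real.pi*Real.sqrt AA) : ℝ) : ℂ)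
    rw [div_self hsp, mul_one] at this
    refine this.congr' ?_
    filter_upwards [hpos] with p hp
    have hM : (MM p.1 p.2 : ℂ) ≠ 0 := by exact_mod_cast (MM_pos p.1 hp p.2).ne'
    have hNM : ((p.1 * ka p.1 * NN p.1 p.2 : ℝ) : ℂ) * (Real.sqrt Real.pi : ℝ) = (MM p.1 p.2 : ℂ) * ((1/(2*Real.pi*Real.sqrt AA) : ℝ) : ℂ) := by
      exact_mod_cast NM p.1 hp p.2
    rw [II_central p hp]
    generalize ((p.1 * ka p.1 * NN p.1 p.2 : ℝ) : ℂ) = a at *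
    generalize ((1/(2*Real.pi*Real.sqrt AA) : ℝ) : ℂ) = b at *
    rw [eq_div_iff hM, mul_div_assoc', div_mul_eq_mul_div, div_eq_iff hsp]
    linear_combination (-(∫ u, JJ p u)) * hNM
  have := h1.add h2
  rw [zero_add] at this
  refine this.congr fun p => ?_
  rw [← add_div, sub_add_cancel]

noncomputable def RR (μ s : ℕ) : ℝ :=
  5*(2*Real.pi*Real.sqrt (5/12))/(2^5*3) * Real.exp ((2*Real.pi*Real.sqrt (5/12)) * Real.sqrt μ) / (μ:ℝ)^2 /
    (1 + Real.exp (-((2*Real.pi*Real.sqrt (5/12)) * s) / (2*Real.sqrt μ)))^2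

lemma RR_pos (μ s : ℕ) (hμ : 0 < μ) : 0 < RR μ s := by
  unfold RR
  have := Real.pi_pos
  have : (0:ℝ) < μ := by exact_mod_cast hμ
  positivity

lemma sqrt_AA : Real.sqrt AA = Real.pi * Real.sqrt (5/12) := by
  unfold AA
  have : 5 * Real.pi^2/12 = Real.pi^2 * (5/12) := by ring
  rw [this, Real.sqrt_mul (sq_nonneg _), Real.sqrt_sq Real.pi_pos.le]

lemma RR_eq (μ s : ℕ) (hμ : 0 < μ) :
    MM (Real.sqrt (AA/μ)) s = 4 * Real.pi^2 * Real.sqrt AA * RR μ s := by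
  have hA := AA_pos
  have hm : (0:ℝ) < μ := by exact_mod_cast hμ
  have hpi := Real.pi_pos
  have hr := sqrt_AA
  have e0 : 2*Real.pi*Real.sqrt (5/12) = 2 * Real.sqrt AA := by rw [hr]; ring
  unfold RR MM wt
  rw [e0, Real.sqrt_div hA.le, ← Real.exp_nat_mul]
  have hrp : 0 < Real.sqrt AA := Real.sqrt_pos.2 hA
  have hr2 : Real.sqrt AA ^ 2 = AA := Real.sq_sqrt hA.le
  have hv : 0 < Real.sqrt μ := Real.sqrt_pos.2 hm
  have hv2 : Real.sqrt μ ^ 2 = μ := Real.sq_sqrt hm.le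
  have hAd : AA = 5*Real.pi^2/12 := rfl
  generalize Real.sqrt AA = r at *
  generalize Real.sqrt (μ:ℝ) = v at *
  have x1 : 2*AA/(r/v) = 2*r*v := by rw [← hr2]; field_simp
  have x2 : (s:ℝ) * -(r/v) = -(2*r*s)/(2*v) := by field_simp
  rw [x1, x2, ← hv2]
  generalize Real.exp (2*r*v) = E1
  have : 0 < 1 + Real.exp (-(2*r*s)/(2*v)) := by positivity
  generalize 1 + Real.exp (-(2*r*s)/(2*v)) = E2 at *
  have h3 : r^2 = 5*Real.pi^2/12 := by rw [hr2, hAd]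
  field_simp
  rw [h3]; ring

lemma N_eq (μ s : ℕ) (hμ : 0 < μ) :
    (∫ θ in (-Real.pi)..Real.pi, II (Real.sqrt (AA/μ)) s θ) = 2*Real.pi*(Nz (μ+s) s : ℂ) := by
  have hA := AA_pos
  have hm : (0:ℝ) < μ := by exact_mod_cast hμ
  have ht : 0 < Real.sqrt (AA/μ) := Real.sqrt_pos.2 (by positivity)
  rw [← Nz_integral μ s _ ht]
  have : AA/(Real.sqrt (AA/μ))^2 = μ := by
    rw [Real.sq_sqrt (by positivity)]; field_simp
  unfold II qq
  rw [this]
  rfl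

lemma final_lim : Tendsto (fun p : ℕ × ℕ => (Nz (p.1+p.2) p.2 : ℝ) / RR p.1 p.2) (atTop ×ˢ ⊤) (𝓝 1) := by
  have hA := AA_pos
  have hg : Tendsto (fun p : ℕ × ℕ => (Real.sqrt (AA/p.1), p.2)) (atTop ×ˢ ⊤) LL := by
    refine Tendsto.prodMk ?_ tendsto_top
    refine (Tendsto.comp (g := fun n : ℕ => Real.sqrt (AA/n)) ?_ tendsto_fst)
    refine tendsto_nhdsWithin_iff.2 ⟨?_, ?_⟩
    · have := (tendsto_const_div_atTop_nhds_zero_nat AA).sqrt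
      simpa using this
    · filter_upwards [eventually_gt_atTop 0] with n hn
      have : (0:ℝ) < n := by exact_mod_cast hn
      exact Real.sqrt_pos.2 (by positivity)
  have h1 := main_lim.comp hg
  have h2 := (h1.const_mul ((2*Real.pi*Real.sqrt AA : ℝ) : ℂ))
  have hrp : 0 < Real.sqrt AA := Real.sqrt_pos.2 hA
  have hpi := Real.pi_pos
  rw [← Complex.ofReal_mul] at h2
  have h3 := (Complex.continuous_re.tendsto _).comp h2
  rw [Complex.ofReal_re] at h3
  have e1 : 2*Real.pi*Real.sqrt AA * (1/(2*Real.pi*Real.sqrt AA)) = 1 := by field_simp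
  rw [e1] at h3
  refine h3.congr' ?_
  have hpos : ∀ᶠ p : ℕ × ℕ in atTop ×ˢ (⊤ : Filter ℕ), 0 < p.1 := tendsto_fst.eventually (eventually_gt_atTop 0)
  filter_upwards [hpos] with p hp
  simp only [Function.comp]
  rw [N_eq _ _ hp, RR_eq _ _ hp]
  have hR := RR_pos p.1 p.2 hp
  have : ((2*Real.pi*Real.sqrt AA : ℝ) : ℂ) * (2*Real.pi*(Nz (p.1+p.2) p.2 : ℂ) / ((4 * Real.pi^2 * Real.sqrt AA * RR p.1 p.2 : ℝ) : ℂ))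
      = (((2*Real.pi*Real.sqrt AA) * (2*Real.pi*(Nz (p.1+p.2) p.2 : ℝ) / (4 * Real.pi^2 * Real.sqrt AA * RR p.1 p.2)) : ℝ) : ℂ) := by
    push_cast; rfl
  rw [this, Complex.ofReal_re]
  field_simp
  ring

lemma final_eps (ε : ℝ) (hε : 0 < ε) : ∃ N : ℕ, ∀ μ s : ℕ, N ≤ μ →
    |(Nz (μ+s) s : ℝ) / RR μ s - 1| < ε := by
  have h := final_lim.eventually (Metric.ball_mem_nhds 1 hε)
  rw [prod_top, eventually_comap] at h
  obtain ⟨N, hN⟩ := eventually_atTop.1 h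
  refine ⟨N, fun μ s hμ => ?_⟩
  have := hN μ hμ (μ, s) rfl
  simpa [Real.dist_eq] using this

lemma main_thm (ε : ℝ) (hε : 0 < ε) : ∃ N : ℕ, ∀ m n : ℕ, 0 < m → 0 < n → m ≤ 2*n → N ≤ min m (2*n-m) →
    |((Dbip m n : ℤ) : ℝ) / RR (min m (2*n-m)) ((n:ℤ)-m).natAbs - 1| < ε := by
  obtain ⟨N, hN⟩ := final_eps ε hε
  refine ⟨N, fun m n hm hn h hmin => ?_⟩
  have := hN (min m (2*n-m)) ((n:ℤ)-m).natAbs hmin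
  have e : min m (2*n-m) + ((n:ℤ)-m).natAbs = n := by omega
  have e2 : Dbip m n = Nz n (((n:ℤ)-m).natAbs : ℕ) := by
    rw [Dbip_eq]
    rcases le_total m n with h1 | h1
    · have : ((((n:ℤ)-m).natAbs : ℕ) : ℤ) = -((m:ℤ) - n) := by omega
      rw [this, Nz_neg]
    · have : ((((n:ℤ)-m).natAbs : ℕ) : ℤ) = ((m:ℤ) - n) := by omega
      rw [this]
  rw [e] at this
  rw [e2]
  exact this

end BP

end

open Real in
/-- uniformly for positive integers `m, n` with `m ≤ 2n`, as
`μ = min(m, 2n - m) → ∞`,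
`D(m,n) ~ (5c/96) · e^{c√μ}/μ² · (1 + e^{-c|n-m|/(2√μ)})⁻²` where `c = 2π√(5/12)`. -/
theorem Dbip_asymptotic (c : ℝ) (hc : c = 2 * π * Real.sqrt (5 / 12)) :
    ∀ ε > (0 : ℝ), ∃ N : ℕ, ∀ m n : ℕ, 0 < m → 0 < n → m ≤ 2 * n →
      N ≤ min m (2 * n - m) →
      |((Dbip m n : ℤ) : ℝ) /
          (5 * c / (2 ^ 5 * 3) *
            Real.exp (c * Real.sqrt (min m (2 * n - m) : ℕ)) /
              ((min m (2 * n - m) : ℕ) : ℝ) ^ 2 /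
            (1 + Real.exp (-(c * |(n : ℝ) - (m : ℝ)|) /
                (2 * Real.sqrt (min m (2 * n - m) : ℕ)))) ^ 2) - 1| < ε := by
  subst hc
  intro ε hε
  obtain ⟨N, hN⟩ := BP.main_thm ε hε
  refine ⟨N, fun m n hm hn h hmin => ?_⟩
  have h1 := hN m n hm hn h hmin
  have e : ((((n:ℤ) - m).natAbs : ℕ) : ℝ) = |(n:ℝ) - (m:ℝ)| := by
    rw [Nat.cast_natAbs]; push_cast; rfl
  unfold BP.RR at h1
  rw [e] at h1
  exact h1
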